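/- Let T : ℝ^d → ℝ^d be γ-contractive with respect to a norm ‖·‖_c with fixed point θ*, suppose T is g∘F decomposable at θ*, and let (w_t)_{t≥0} be i.i.d. zero-mean ℝ^d-valued random vectors with E‖w₀‖⁴ < ∞. For α > 0 small enough, let μ_α be the unique stationary probability measure with finite second moment of the SA Markov kernel with stepsize α, and let ν_α be the pushforward of μ_α under x ↦ (x − θ*)/√α. Then there exists a unique probability measure ν on ℝ^d with finite second moment, depending on the law of the noise only through T and the covariance matrix Var(w₀), such that lim_{α→0⁺} W₂(ν_α, ν) = 0 (W₂ with respect to ‖·‖_c). Consequently, lim_{α→0⁺} (1/√α) ‖ ∫x dμ_α(x) − θ* − √α ∫y dν(y) ‖ = 0, i.e., the mean of μ_α equals θ* + √α ∫y dν(y) + o(√α). -/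

import Mathlib

open MeasureTheory ProbabilityTheory Filter Topology

noncomputable section

/-- A function on `ℝ^d` satisfying the axioms of a norm. -/
structure IsNormLike {V : Type*} [AddCommGroup V] [Module ℝ V] (c : V → ℝ) : Prop where
  add_le : ∀ x y, c (x + y) ≤ c x + c y
  smul_eq : ∀ (r : ℝ) (x : V), c (r • x) = |r| * c x
  pos : ∀ x, x ≠ 0 → 0 < c x

/-- `π` is a coupling of `μ` and `ν`. -/
def IsCoupling {X : Type*} [MeasurableSpace X] (π : Measure (X × X)) (μ ν : Measure X) : Prop :=
  π.map Prod.fst = μ ∧ π.map Prod.snd = ν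

/-- Squared Wasserstein-2 distance with respect to the norm-like function `c`. -/
def W2sq {X : Type*} [MeasurableSpace X] [AddGroup X] (c : X → ℝ) (μ ν : Measure X) : ℝ :=
  sInf { r : ℝ | ∃ π : Measure (X × X), IsCoupling π μ ν ∧
    Integrable (fun p => (c (p.1 - p.2)) ^ 2) π ∧ r = ∫ p, (c (p.1 - p.2)) ^ 2 ∂π }

/-- Wasserstein-2 distance with respect to the norm-like function `c`. -/
def W2dist {X : Type*} [MeasurableSpace X] [AddGroup X] (c : X → ℝ) (μ ν : Measure X) : ℝ :=
  Real.sqrt (W2sq c μ ν)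

/-- One step of the SA Markov kernel with stepsize `α` and noise distribution `νw`,
at the level of laws. -/
def saStep {d : ℕ} (T : EuclideanSpace ℝ (Fin d) → EuclideanSpace ℝ (Fin d)) (α : ℝ)
    (νw : Measure (EuclideanSpace ℝ (Fin d))) (μ : Measure (EuclideanSpace ℝ (Fin d))) :
    Measure (EuclideanSpace ℝ (Fin d)) :=
  Measure.map (fun p => p.1 + α • (T p.1 - p.1 + p.2)) (μ.prod νw)

/-!
In the variable `y = (x - θ) / √α` the recursion has drift `U y - y`, where `U` is `T` zoomed in at
`θ`, and its increments are `√α • w`. As `α → 0` the operators `U` converge to the positively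
homogeneous derivative `G = g ∘ ∇F(0)` of `T`, which is again `γ`-contractive. Driving the
recursion and the linear one (`T = 0`) by the same noise bounds the fourth moments of the stationary
laws uniformly in `α`, so these laws are precompact for `W₂`.

Run the stationary recursion for a short time `τ`, that is for `⌊τ / α⌋` steps. The drift hardly
changes meanwhile, and the accumulated noise is asymptotically Gaussian with covariance `τ • Σ`.
Hence a cluster point `ν` of the stationary laws is moved by `o(τ)` only by one Euler step of length
`τ` with drift `G y - y` and that Gaussian noise. Since such a step contracts `W₂` by the factor
`1 - (1 - γ) τ`, two laws with this property are equal: there is a single cluster point, and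
it depends on the noise only through its covariance. The expansion of the mean follows because means
are Lipschitz for `W₂`.
-/

open scoped ENNReal NNReal

namespace IsNormLike

section Module

variable {V : Type*} [AddCommGroup V] [Module ℝ V] {c : V → ℝ}

lemma map_zero (hc : IsNormLike c) : c 0 = 0 := by
  simpa using hc.smul_eq 0 0

lemma nonneg (hc : IsNormLike c) (x : V) : 0 ≤ c x := by
  by_cases hx : x = 0
  · simp [hx, hc.map_zero]
  · exact (hc.pos x hx).le

lemma map_neg (hc : IsNormLike c) (x : V) : c (-x) = c x := by
  simpa using hc.smul_eq (-1) x

lemma sub_le (hc : IsNormLike c) (x y : V) : c (x - y) ≤ c x + c y := by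
  simpa [sub_eq_add_neg, hc.map_neg] using hc.add_le x (-y)

lemma map_sub_rev (hc : IsNormLike c) (x y : V) : c (x - y) = c (y - x) := by
  rw [← hc.map_neg, neg_sub]

lemma sub_le_sub_add_sub (hc : IsNormLike c) (x y z : V) : c (x - z) ≤ c (x - y) + c (y - z) := by
  simpa using hc.add_le (x - y) (y - z)

lemma smul_of_nonneg (hc : IsNormLike c) {r : ℝ} (hr : 0 ≤ r) (x : V) : c (r • x) = r * c x := by
  rw [hc.smul_eq, abs_of_nonneg hr]

end Module

section FiniteDimensional

variable {E : Type*} [NormedAddCommGroup E] [NormedSpace ℝ E] [FiniteDimensional ℝ E] {c : E → ℝ}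

lemma continuous (hc : IsNormLike c) : Continuous c :=
  (Seminorm.of c hc.add_le hc.smul_eq).convexOn.locallyLipschitz.continuous

lemma exists_le_norm (hc : IsNormLike c) : ∃ C, 0 < C ∧ ∀ x, c x ≤ C * ‖x‖ :=
  Seminorm.bound_of_continuous_normedSpace (Seminorm.of c hc.add_le hc.smul_eq) hc.continuous

lemma exists_norm_le (hc : IsNormLike c) : ∃ M, 0 < M ∧ ∀ x, ‖x‖ ≤ M * c x := by
  rcases subsingleton_or_nontrivial E with hE | hE
  · exact ⟨1, one_pos, fun x => by simp [Subsingleton.elim x 0, hc.map_zero]⟩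
  obtain ⟨u, hu, hmin⟩ := (isCompact_sphere (0 : E) 1).exists_isMinOn
    (NormedSpace.sphere_nonempty.2 zero_le_one) hc.continuous.continuousOn
  have hcu : 0 < c u := hc.pos _ (ne_zero_of_mem_unit_sphere ⟨u, hu⟩)
  refine ⟨(c u)⁻¹, by positivity, fun x => ?_⟩
  rcases eq_or_ne x 0 with rfl | hx
  · simp [hc.map_zero]
  have hx' : 0 < ‖x‖ := norm_pos_iff.2 hx
  have hle : c u ≤ ‖x‖⁻¹ * c x := by
    rw [← hc.smul_of_nonneg (by positivity)]
    exact hmin (by simp [norm_smul, hx'.ne'])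
  rw [inv_mul_eq_div, le_div_iff₀ hcu]
  calc ‖x‖ * c u ≤ ‖x‖ * (‖x‖⁻¹ * c x) := by gcongr
    _ = c x := by field_simp

lemma continuous_of_le_mul (hc : IsNormLike c) {T : E → E} {γ : ℝ}
    (hT : ∀ x y, c (T x - T y) ≤ γ * c (x - y)) : Continuous T := by
  obtain ⟨M, hM₀, hM⟩ := hc.exists_norm_le
  have hcc := hc.continuous
  refine continuous_iff_continuousAt.2 fun y => tendsto_iff_norm_sub_tendsto_zero.2 ?_
  have hlim : Tendsto (fun x => M * (γ * c (x - y))) (𝓝 y) (𝓝 0) := by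
    have : Continuous fun x => M * (γ * c (x - y)) := by fun_prop
    simpa [hc.map_zero] using this.tendsto y
  refine squeeze_zero (fun x => norm_nonneg _) (fun x => (hM _).trans ?_) hlim
  gcongr
  exact hT x y

lemma measurable [MeasurableSpace E] [BorelSpace E] (hc : IsNormLike c) : Measurable c :=
  hc.continuous.measurable

lemma measurable_fst_sub_snd [MeasurableSpace E] [BorelSpace E] (hc : IsNormLike c) :
    Measurable fun p : E × E => c (p.1 - p.2) := by
  have := hc.measurable
  fun_prop

end FiniteDimensional

end IsNormLike

section LpNorm

variable {Ω : Type*} [MeasurableSpace Ω] {P : Measure Ω}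

lemma eLpNorm_le_mul_add_mul {f g h : Ω → ℝ} {p : ℝ≥0∞} {a b : ℝ} (hp : 1 ≤ p)
    (hg : AEStronglyMeasurable g P) (hh : AEStronglyMeasurable h P) (ha : 0 ≤ a) (hb : 0 ≤ b)
    (hf : ∀ᵐ ω ∂P, |f ω| ≤ a * g ω + b * h ω) :
    eLpNorm f p P ≤ .ofReal a * eLpNorm g p P + .ofReal b * eLpNorm h p P := by
  calc eLpNorm f p P ≤ eLpNorm (a • g + b • h) p P := eLpNorm_mono_ae_real hf
    _ ≤ eLpNorm (a • g) p P + eLpNorm (b • h) p P :=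
      eLpNorm_add_le (hg.const_smul a) (hh.const_smul b) hp
    _ = .ofReal a * eLpNorm g p P + .ofReal b * eLpNorm h p P := by
      rw [eLpNorm_const_smul, eLpNorm_const_smul, Real.enorm_of_nonneg ha,
        Real.enorm_of_nonneg hb]

lemma eLpNorm_le_add {f g h : Ω → ℝ} {p : ℝ≥0∞} (hp : 1 ≤ p) (hg : AEStronglyMeasurable g P)
    (hh : AEStronglyMeasurable h P) (hf : ∀ᵐ ω ∂P, |f ω| ≤ g ω + h ω) :
    eLpNorm f p P ≤ eLpNorm g p P + eLpNorm h p P := by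
  simpa using eLpNorm_le_mul_add_mul hp hg hh zero_le_one zero_le_one (by simpa using hf)

lemma integral_norm_pow_eq_toReal_eLpNorm_pow {V : Type*} [NormedAddCommGroup V] {f : Ω → V}
    {n : ℕ} (hn : n ≠ 0) (hf : MemLp f n P) : ∫ ω, ‖f ω‖ ^ n ∂P = (eLpNorm f n P).toReal ^ n := by
  have hint : 0 ≤ ∫ ω, ‖f ω‖ ^ n ∂P := integral_nonneg fun ω => by positivity
  rw [hf.eLpNorm_eq_integral_rpow_norm (by exact_mod_cast hn) (by simp)]
  simp only [ENNReal.toReal_natCast, Real.rpow_natCast]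
  rw [ENNReal.toReal_ofReal (by positivity), Real.rpow_inv_natCast_pow hint hn]

end LpNorm

namespace IsCoupling

variable {X : Type*} [MeasurableSpace X] {π π' : Measure (X × X)} {μ ν ξ : Measure X}

lemma prod (μ ν : Measure X) [IsProbabilityMeasure μ] [IsProbabilityMeasure ν] :
    IsCoupling (μ.prod ν) μ ν := by
  simp [IsCoupling]

lemma map {Ω : Type*} [MeasurableSpace Ω] (P : Measure Ω) {f g : Ω → X} (hf : Measurable f)
    (hg : Measurable g) : IsCoupling (P.map fun ω => (f ω, g ω)) (P.map f) (P.map g) :=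
  ⟨Measure.map_map measurable_fst (hf.prodMk hg), Measure.map_map measurable_snd (hf.prodMk hg)⟩

lemma isProbabilityMeasure [IsProbabilityMeasure μ] (h : IsCoupling π μ ν) :
    IsProbabilityMeasure π := by
  have : IsProbabilityMeasure (π.map Prod.fst) := by rw [h.1]; infer_instance
  exact Measure.isProbabilityMeasure_of_map Prod.fst

lemma swap (h : IsCoupling π μ ν) : IsCoupling (π.map Prod.swap) ν μ := by
  constructor
  · rw [Measure.map_map measurable_fst measurable_swap]
    exact h.2
  · rw [Measure.map_map measurable_snd measurable_swap]
    exact h.1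

lemma eLpNorm_comp_fst {f : X → ℝ} (hf : Measurable f) (h : IsCoupling π μ ν) (p : ℝ≥0∞) :
    eLpNorm (fun q => f q.1) p π = eLpNorm f p μ := by
  rw [← h.1, eLpNorm_map_measure hf.aestronglyMeasurable measurable_fst.aemeasurable]; rfl

lemma eLpNorm_comp_snd {f : X → ℝ} (hf : Measurable f) (h : IsCoupling π μ ν) (p : ℝ≥0∞) :
    eLpNorm (fun q => f q.2) p π = eLpNorm f p ν := by
  rw [← h.2, eLpNorm_map_measure hf.aestronglyMeasurable measurable_snd.aemeasurable]; rfl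

lemma eLpNorm_sub_le {E : Type*} [NormedAddCommGroup E] [NormedSpace ℝ E] [FiniteDimensional ℝ E]
    [MeasurableSpace E] [BorelSpace E] {c : E → ℝ} {π : Measure (E × E)} {μ ν : Measure E}
    (h : IsCoupling π μ ν) (hc : IsNormLike c) :
    eLpNorm (fun p => c (p.1 - p.2)) 2 π ≤ eLpNorm c 2 μ + eLpNorm c 2 ν := by
  rw [← h.eLpNorm_comp_fst hc.measurable, ← h.eLpNorm_comp_snd hc.measurable]
  refine eLpNorm_le_add one_le_two (hc.measurable.comp measurable_fst).aestronglyMeasurable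
    (hc.measurable.comp measurable_snd).aestronglyMeasurable (ae_of_all _ fun p => ?_)
  rw [abs_of_nonneg (hc.nonneg _)]
  exact hc.sub_le _ _

lemma exists_glue [StandardBorelSpace X] [Nonempty X] [IsProbabilityMeasure μ]
    [IsProbabilityMeasure ν] (h : IsCoupling π μ ν) (h' : IsCoupling π' ν ξ) :
    ∃ Q : Measure ((X × X) × X), Q.map Prod.fst = π ∧ Q.map (fun q => (q.1.2, q.2)) = π' := by
  have := h.isProbabilityMeasure
  have := h'.isProbabilityMeasure
  refine ⟨π ⊗ₘ π'.condKernel.comap Prod.snd measurable_snd, Measure.fst_compProd _ _, ?_⟩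
  refine Measure.ext_of_lintegral _ fun f hf => ?_
  have hm : Measurable fun q : (X × X) × X => (q.1.2, q.2) := by fun_prop
  conv_rhs => rw [← π'.disintegrate π'.condKernel]
  rw [lintegral_map hf hm,
    Measure.lintegral_compProd (f := fun q : (X × X) × X => f (q.1.2, q.2)) (hf.comp hm),
    Measure.lintegral_compProd hf, Measure.fst, h'.1, ← h.2,
    lintegral_map (by fun_prop) measurable_snd]
  simp only [Kernel.comap_apply]

end IsCoupling

/-- The Wasserstein-2 distance with respect to `c`, as an extended nonnegative real: unlike
`W2dist` it is infinite when no coupling has finite cost. -/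
def wasserstein {X : Type*} [MeasurableSpace X] [Sub X] (c : X → ℝ) (μ ν : Measure X) : ℝ≥0∞ :=
  ⨅ (π : Measure (X × X)) (_ : IsCoupling π μ ν), eLpNorm (fun p => c (p.1 - p.2)) 2 π

section Wasserstein

lemma wasserstein_le {X : Type*} [MeasurableSpace X] [Sub X] {c : X → ℝ} {μ ν : Measure X}
    {π : Measure (X × X)} (h : IsCoupling π μ ν) :
    wasserstein c μ ν ≤ eLpNorm (fun p => c (p.1 - p.2)) 2 π :=
  iInf₂_le π h

variable {E : Type*} [NormedAddCommGroup E] [NormedSpace ℝ E] [FiniteDimensional ℝ E]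
  [MeasurableSpace E] [BorelSpace E] {c : E → ℝ} {μ ν : Measure E}

lemma wasserstein_map_le {Ω : Type*} [MeasurableSpace Ω] (hc : IsNormLike c) (P : Measure Ω)
    {f g : Ω → E} (hf : Measurable f) (hg : Measurable g) :
    wasserstein c (P.map f) (P.map g) ≤ eLpNorm (fun ω => c (f ω - g ω)) 2 P := by
  refine (wasserstein_le (.map P hf hg)).trans_eq ?_
  exact eLpNorm_map_measure hc.measurable_fst_sub_snd.aestronglyMeasurable
    (hf.prodMk hg).aemeasurable

lemma wasserstein_self (hc : IsNormLike c) (μ : Measure E) : wasserstein c μ μ = 0 := by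
  simpa [hc.map_zero, Measure.map_id'] using wasserstein_map_le hc μ measurable_id' measurable_id'

lemma wasserstein_comm (hc : IsNormLike c) (μ ν : Measure E) :
    wasserstein c μ ν = wasserstein c ν μ := by
  suffices h : ∀ μ ν : Measure E, wasserstein c μ ν ≤ wasserstein c ν μ from
    (h μ ν).antisymm (h ν μ)
  refine fun μ ν => le_iInf₂ fun π hπ => (wasserstein_le hπ.swap).trans_eq ?_
  rw [eLpNorm_map_measure hc.measurable_fst_sub_snd.aestronglyMeasurable
    measurable_swap.aemeasurable]
  simp only [Function.comp_def, Prod.fst_swap, Prod.snd_swap, hc.map_sub_rev]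

lemma wasserstein_triangle (hc : IsNormLike c) (μ ν ξ : Measure E) [IsProbabilityMeasure μ]
    [IsProbabilityMeasure ν] : wasserstein c μ ξ ≤ wasserstein c μ ν + wasserstein c ν ξ := by
  change _ ≤ (⨅ π, ⨅ _ : IsCoupling π μ ν, _) + ⨅ π, ⨅ _ : IsCoupling π ν ξ, _
  simp only [ENNReal.iInf_add, ENNReal.add_iInf]
  refine le_iInf₂ fun π' hπ' => le_iInf₂ fun π hπ => ?_
  obtain ⟨Q, rfl, rfl⟩ := hπ.exists_glue hπ'
  have hcm := hc.measurable_fst_sub_snd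
  have hm : Measurable fun q : (E × E) × E => (q.1.2, q.2) := by fun_prop
  have hμ : Q.map (fun q => q.1.1) = μ := by
    rw [← hπ.1, Measure.map_map measurable_fst measurable_fst]; rfl
  have hξ : Q.map (fun q => q.2) = ξ := by
    rw [← hπ'.2, Measure.map_map measurable_snd hm]; rfl
  rw [eLpNorm_map_measure hcm.aestronglyMeasurable measurable_fst.aemeasurable,
    eLpNorm_map_measure hcm.aestronglyMeasurable hm.aemeasurable, ← hμ, ← hξ]
  refine (wasserstein_map_le hc Q (by fun_prop) (by fun_prop)).trans ?_
  refine eLpNorm_le_add one_le_two (hcm.comp measurable_fst).aestronglyMeasurable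
    (hcm.comp hm).aestronglyMeasurable (ae_of_all _ fun q => ?_)
  rw [abs_of_nonneg (hc.nonneg _)]
  exact hc.sub_le_sub_add_sub _ _ _

lemma wasserstein_le_add (hc : IsNormLike c) (μ ν : Measure E) [IsProbabilityMeasure μ]
    [IsProbabilityMeasure ν] : wasserstein c μ ν ≤ eLpNorm c 2 μ + eLpNorm c 2 ν :=
  (wasserstein_le (.prod μ ν)).trans ((IsCoupling.prod μ ν).eLpNorm_sub_le hc)

lemma W2dist_eq_toReal_wasserstein (hc : IsNormLike c) [IsProbabilityMeasure μ]
    [IsProbabilityMeasure ν] (hμ : eLpNorm c 2 μ ≠ ∞) (hν : eLpNorm c 2 ν ≠ ∞) :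
    W2dist c μ ν = (wasserstein c μ ν).toReal := by
  have hcost : ∀ π, IsCoupling π μ ν → MemLp (fun p => c (p.1 - p.2)) 2 π := fun π hπ =>
    ⟨hc.measurable_fst_sub_snd.aestronglyMeasurable,
      (hπ.eLpNorm_sub_le hc).trans_lt (ENNReal.add_lt_top.2 ⟨hμ.lt_top, hν.lt_top⟩)⟩
  have hsq : ∀ π, IsCoupling π μ ν →
      ∫ p, c (p.1 - p.2) ^ 2 ∂π = (eLpNorm (fun p => c (p.1 - p.2)) 2 π).toReal ^ 2 := by
    intro π hπ
    simpa [abs_of_nonneg (hc.nonneg _)] using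
      integral_norm_pow_eq_toReal_eLpNorm_pow two_ne_zero (hcost π hπ)
  have hint : ∀ π, IsCoupling π μ ν → Integrable (fun p => c (p.1 - p.2) ^ 2) π := fun π hπ =>
    (hcost π hπ).integrable_sq
  have hne : wasserstein c μ ν ≠ ∞ :=
    ((wasserstein_le (.prod μ ν)).trans_lt (hcost _ (.prod μ ν)).2).ne
  refine le_antisymm (le_of_forall_gt fun r hr => ?_) (Real.le_sqrt_of_sq_le ?_)
  · have hr₀ : 0 < r := ENNReal.toReal_nonneg.trans_lt hr
    obtain ⟨π, hπ, hlt⟩ : ∃ π, IsCoupling π μ ν ∧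
        eLpNorm (fun p => c (p.1 - p.2)) 2 π < .ofReal r := by
      simpa only [wasserstein, iInf_lt_iff, exists_prop] using
        (ENNReal.lt_ofReal_iff_toReal_lt hne).2 hr
    have hle : W2sq c μ ν ≤ (eLpNorm (fun p => c (p.1 - p.2)) 2 π).toReal ^ 2 := by
      refine csInf_le ⟨0, ?_⟩ ⟨π, hπ, hint π hπ, (hsq π hπ).symm⟩
      rintro _ ⟨π', -, -, rfl⟩
      exact integral_nonneg fun p => sq_nonneg _
    rw [W2dist, Real.sqrt_lt' hr₀]
    refine hle.trans_lt (pow_lt_pow_left₀ ?_ ENNReal.toReal_nonneg two_ne_zero)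
    exact (ENNReal.lt_ofReal_iff_toReal_lt hlt.ne_top).1 hlt
  · refine le_csInf ⟨_, μ.prod ν, .prod μ ν, hint _ (.prod μ ν), rfl⟩ ?_
    rintro _ ⟨π, hπ, -, rfl⟩
    rw [hsq π hπ]
    gcongr
    exacts [(hcost π hπ).2.ne, wasserstein_le hπ]

end Wasserstein

section WeakConvergence

variable {X ι : Type*} [MeasurableSpace X] [TopologicalSpace X] [OpensMeasurableSpace X]
  {l : Filter ι} {P : ι → ProbabilityMeasure X} {Q : ProbabilityMeasure X}

lemma tendsto_lintegral_of_le (h : Tendsto P l (𝓝 Q)) {f : X → ℝ≥0} (hf : Continuous f)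
    {N : ℝ≥0} (hN : ∀ x, f x ≤ N) :
    Tendsto (fun i => ∫⁻ x, f x ∂(P i : Measure X)) l (𝓝 (∫⁻ x, f x ∂(Q : Measure X))) := by
  have hmem : ∀ x, (f x : ℝ) ∈ Set.Icc 0 (N : ℝ) := fun x => ⟨(f x).2, hN x⟩
  exact ProbabilityMeasure.tendsto_iff_forall_lintegral_tendsto.1 h
    (.mkOfBound ⟨f, hf⟩ (N - 0) fun x y => Real.dist_le_of_mem_Icc (hmem x) (hmem y))

lemma eventually_mul_lintegral_le (h : Tendsto P l (𝓝 Q)) {f : X → ℝ≥0} (hf : Continuous f)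
    {N : ℝ≥0} (hN : ∀ y, f y ≤ N) {η : ℝ≥0} (hη : 0 < η) :
    ∀ᶠ i in l, (1 - η : ℝ≥0) * ∫⁻ y, f y ∂(Q : Measure X) ≤ ∫⁻ y, f y ∂(P i : Measure X) := by
  have hQ : ∫⁻ y, f y ∂(Q : Measure X) ≠ ∞ :=
    ((lintegral_mono fun y => ENNReal.coe_le_coe.2 (hN y)).trans_lt (by simp)).ne
  rcases eq_or_ne (∫⁻ y, f y ∂(Q : Measure X)) 0 with h0 | h0
  · simp [h0]
  · refine (tendsto_lintegral_of_le h hf hN).eventually_const_le ?_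
    have hη1 : ((1 - η : ℝ≥0) : ℝ≥0∞) < 1 := ENNReal.coe_lt_coe.2 (tsub_lt_self one_pos hη)
    simpa using ENNReal.mul_lt_mul_left h0 hQ hη1

lemma lintegral_le_of_tendsto [l.NeBot] (h : Tendsto P l (𝓝 Q)) {f : X → ℝ≥0} (hf : Continuous f)
    {K : ℝ≥0∞} (hK : ∀ᶠ i in l, ∫⁻ x, f x ∂(P i : Measure X) ≤ K) :
    ∫⁻ x, f x ∂(Q : Measure X) ≤ K := by
  have hcont : ∀ N : ℕ, Continuous fun x => min (f x) N := fun N => hf.min continuous_const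
  have hsup : ∀ x, (f x : ℝ≥0∞) = ⨆ N : ℕ, ((min (f x) N : ℝ≥0) : ℝ≥0∞) := by
    refine fun x => le_antisymm ?_ (iSup_le fun N => ENNReal.coe_le_coe.2 (min_le_left _ _))
    obtain ⟨N, hN⟩ := exists_nat_ge (f x)
    exact le_iSup_of_le N (by rw [min_eq_left hN])
  simp only [hsup]
  rw [lintegral_iSup fun N => (hcont N).measurable.coe_nnreal_ennreal]
  · refine iSup_le fun N => le_of_tendsto (tendsto_lintegral_of_le h (hcont N)
      fun x => min_le_right _ _) (hK.mono fun i hi => (lintegral_mono fun x => ?_).trans hi)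
    exact ENNReal.coe_le_coe.2 (min_le_left _ _)
  · intro N N' hN x
    simp only [ENNReal.coe_le_coe]
    gcongr

lemma eLpNorm_le_of_tendsto [l.NeBot] {V : Type*} [NormedAddCommGroup V]
    (h : Tendsto P l (𝓝 Q)) {f : X → V} (hf : Continuous f) {p : ℝ≥0∞} (hp₀ : p ≠ 0)
    (hp : p ≠ ∞) {K : ℝ≥0∞} (hK : ∀ᶠ i in l, eLpNorm f p (P i : Measure X) ≤ K) :
    eLpNorm f p (Q : Measure X) ≤ K := by
  have hp' : 0 < p.toReal := ENNReal.toReal_pos hp₀ hp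
  have henorm : ∀ x, ‖f x‖ₑ ^ p.toReal = ((‖f x‖₊ ^ p.toReal : ℝ≥0) : ℝ≥0∞) := fun x => by
    rw [ENNReal.coe_rpow_of_nonneg _ hp'.le, enorm_eq_nnnorm]
  simp only [eLpNorm_eq_lintegral_rpow_enorm_toReal hp₀ hp, one_div,
    ENNReal.rpow_inv_le_iff hp', henorm] at hK ⊢
  exact lintegral_le_of_tendsto h
    ((NNReal.continuous_rpow_const hp'.le).comp hf.nnnorm) hK

end WeakConvergence

section Tight

variable {E : Type*} [NormedAddCommGroup E] [NormedSpace ℝ E] [FiniteDimensional ℝ E]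
  [MeasurableSpace E] [BorelSpace E] {c : E → ℝ} {p K : ℝ≥0∞}

lemma isTightMeasureSet_setOf_eLpNorm_le (hc : IsNormLike c) (hp₀ : p ≠ 0) (hp : p ≠ ∞)
    (hK : K ≠ ∞) : IsTightMeasureSet {μ : Measure E | eLpNorm c p μ ≤ K} := by
  have hp' : 0 < p.toReal := ENNReal.toReal_pos hp₀ hp
  obtain ⟨M, hM₀, hM⟩ := hc.exists_norm_le
  refine isTightMeasureSet_of_tendsto_measure_norm_gt ?_
  have hlim : Tendsto (fun r : ℝ => (ENNReal.ofReal (r / M))⁻¹ ^ p.toReal * K ^ p.toReal) atTop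
      (𝓝 0) := by
    have hinv := tendsto_inv_iff.2
      (ENNReal.tendsto_ofReal_atTop.comp (tendsto_id.atTop_div_const hM₀))
    have hpow := ENNReal.Tendsto.mul_const (hinv.ennrpow_const p.toReal)
      (.inr (ENNReal.rpow_ne_top_of_nonneg hp'.le hK))
    simpa [hp'] using hpow
  refine tendsto_of_tendsto_of_tendsto_of_le_of_le' tendsto_const_nhds hlim
    (.of_forall fun _ => zero_le) ?_
  filter_upwards [eventually_gt_atTop 0] with r hr
  refine iSup₂_le fun μ hμ => ?_
  have hr' : ENNReal.ofReal (r / M) ≠ 0 := by simpa using by positivity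
  calc μ {x | r < ‖x‖} ≤ μ {x | ENNReal.ofReal (r / M) ≤ ‖c x‖ₑ} := by
        refine measure_mono fun x hx => ?_
        rw [Set.mem_ofPred_eq, Real.enorm_of_nonneg (hc.nonneg x)]
        exact ENNReal.ofReal_le_ofReal ((div_le_iff₀' hM₀).2 ((le_of_lt hx).trans (hM x)))
    _ ≤ (ENNReal.ofReal (r / M))⁻¹ ^ p.toReal * eLpNorm c p μ ^ p.toReal :=
        meas_ge_le_mul_pow_eLpNorm_enorm μ hp₀ hp hc.measurable.aestronglyMeasurable hr' (by simp)
    _ ≤ (ENNReal.ofReal (r / M))⁻¹ ^ p.toReal * K ^ p.toReal := by gcongr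

lemma exists_tendsto_of_eLpNorm_le {ι : Type*} (hc : IsNormLike c) (hp₀ : p ≠ 0) (hp : p ≠ ∞)
    (hK : K ≠ ∞) (u : Ultrafilter ι) {P : ι → ProbabilityMeasure E}
    (h : ∀ᶠ i in u, eLpNorm c p (P i : Measure E) ≤ K) : ∃ Q, Tendsto P u (𝓝 Q) := by
  have hcomp : IsCompact (closure {Q : ProbabilityMeasure E | eLpNorm c p (Q : Measure E) ≤ K}) :=
    isCompact_closure_of_isTightMeasureSet <|
      (isTightMeasureSet_setOf_eLpNorm_le hc hp₀ hp hK).subset <| by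
        rintro _ ⟨Q, hQ, rfl⟩
        exact hQ
  obtain ⟨Q, -, hQ⟩ := hcomp.ultrafilter_le_nhds (u.map P)
    (le_principal_iff.2 (h.mono fun i hi => subset_closure hi))
  exact ⟨Q, hQ⟩

end Tight

section LipschitzIntegral

variable {E : Type*} [NormedAddCommGroup E] [NormedSpace ℝ E] [FiniteDimensional ℝ E]
  [MeasurableSpace E] [BorelSpace E] {c : E → ℝ} {μ ν : Measure E}

lemma IsCoupling.integral_sub_integral {V : Type*} [NormedAddCommGroup V] [NormedSpace ℝ V]
    {X : Type*} [MeasurableSpace X] {π : Measure (X × X)} {μ ν : Measure X} (h : IsCoupling π μ ν)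
    {f : X → V} (hμ : Integrable f μ) (hν : Integrable f ν) :
    ∫ x, f x ∂μ - ∫ x, f x ∂ν = ∫ q, (f q.1 - f q.2) ∂π := by
  obtain ⟨rfl, rfl⟩ := h
  rw [integral_map measurable_fst.aemeasurable hμ.1, integral_map measurable_snd.aemeasurable hν.1]
  exact (integral_sub (hμ.comp_measurable measurable_fst)
    (hν.comp_measurable measurable_snd)).symm

lemma enorm_integral_sub_le_wasserstein {V : Type*} [NormedAddCommGroup V] [NormedSpace ℝ V]
    [IsProbabilityMeasure μ] [IsProbabilityMeasure ν] (hc : IsNormLike c) {M : ℝ} (hM₀ : 0 ≤ M)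
    (hM : ∀ x, ‖x‖ ≤ M * c x) {L : ℝ≥0} {f : E → V} (hf : LipschitzWith L f)
    (hμ : Integrable f μ) (hν : Integrable f ν) :
    ‖∫ x, f x ∂μ - ∫ x, f x ∂ν‖ₑ ≤ .ofReal (L * M) * wasserstein c μ ν := by
  rw [wasserstein, iInf_subtype',
    ENNReal.mul_iInf' (fun h => absurd h ENNReal.ofReal_ne_top)
      fun _ => ⟨_, IsCoupling.prod μ ν⟩]
  refine le_iInf fun ⟨π, hπ⟩ => ?_
  have := hπ.isProbabilityMeasure
  have hcost := hc.measurable_fst_sub_snd.aestronglyMeasurable (μ := π)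
  calc ‖∫ x, f x ∂μ - ∫ x, f x ∂ν‖ₑ
      ≤ ∫⁻ q, ‖f q.1 - f q.2‖ₑ ∂π := by
        rw [hπ.integral_sub_integral hμ hν]
        exact enorm_integral_le_lintegral_enorm _
    _ ≤ ∫⁻ q, .ofReal (L * M) * ‖c (q.1 - q.2)‖ₑ ∂π := by
        refine lintegral_mono fun q => ?_
        rw [Real.enorm_of_nonneg (hc.nonneg _), ← ENNReal.ofReal_mul (by positivity),
          ← ofReal_norm, mul_assoc]
        refine ENNReal.ofReal_le_ofReal ((hf.norm_sub_le _ _).trans ?_)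
        gcongr
        exact hM _
    _ = .ofReal (L * M) * eLpNorm (fun q => c (q.1 - q.2)) 1 π := by
        rw [lintegral_const_mul' _ _ ENNReal.ofReal_ne_top, eLpNorm_one_eq_lintegral_enorm]
    _ ≤ .ofReal (L * M) * eLpNorm (fun q => c (q.1 - q.2)) 2 π := by
        gcongr
        exact eLpNorm_le_eLpNorm_of_exponent_le one_le_two hcost

lemma tendsto_integral_of_tendsto_wasserstein {ι V : Type*} [NormedAddCommGroup V]
    [NormedSpace ℝ V] {l : Filter ι} (hc : IsNormLike c) {P : ι → ProbabilityMeasure E}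
    [IsProbabilityMeasure ν] {L : ℝ≥0} {f : E → V} (hf : LipschitzWith L f)
    (hP : ∀ᶠ i in l, Integrable f (P i : Measure E)) (hν : Integrable f ν)
    (h : Tendsto (fun i => wasserstein c (P i : Measure E) ν) l (𝓝 0)) :
    Tendsto (fun i => ∫ x, f x ∂(P i : Measure E)) l (𝓝 (∫ x, f x ∂ν)) := by
  obtain ⟨M, hM₀, hM⟩ := hc.exists_norm_le
  rw [tendsto_iff_edist_tendsto_0]
  simp only [edist_eq_enorm_sub]
  refine tendsto_of_tendsto_of_tendsto_of_le_of_le' tendsto_const_nhds ?_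
    (.of_forall fun _ => zero_le)
    (hP.mono fun i hi => enorm_integral_sub_le_wasserstein hc hM₀.le hM hf hi hν)
  simpa using ENNReal.Tendsto.const_mul h (.inr (ENNReal.ofReal_ne_top (r := L * M)))

lemma tendsto_of_tendsto_wasserstein {ι : Type*} {l : Filter ι} [l.IsCountablyGenerated]
    (hc : IsNormLike c) {P : ι → ProbabilityMeasure E} {Q : ProbabilityMeasure E}
    (h : Tendsto (fun i => wasserstein c (P i : Measure E) Q) l (𝓝 0)) : Tendsto P l (𝓝 Q) := by
  refine tendsto_iff_forall_lipschitz_integral_tendsto.2 fun f ⟨B, hB⟩ ⟨L, hL⟩ => ?_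
  have hint : ∀ R : ProbabilityMeasure E, Integrable f (R : Measure E) := fun R =>
    .of_bound hL.continuous.aestronglyMeasurable (‖f 0‖ + B)
      (ae_of_all _ fun x => (norm_le_norm_add_norm_sub' (f x) (f 0)).trans (by
        rw [← dist_eq_norm]
        gcongr
        exact hB x 0))
  exact tendsto_integral_of_tendsto_wasserstein hc hL (.of_forall fun i => hint (P i)) (hint Q) h

lemma eq_of_wasserstein_eq_zero [IsProbabilityMeasure μ] [IsProbabilityMeasure ν]
    (hc : IsNormLike c) (h : wasserstein c μ ν = 0) : μ = ν := by
  let μ' : ProbabilityMeasure E := ⟨μ, ‹_›⟩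
  let ν' : ProbabilityMeasure E := ⟨ν, ‹_›⟩
  have hlim : Tendsto (fun _ : ℕ => μ') atTop (𝓝 ν') :=
    tendsto_of_tendsto_wasserstein hc (by simp [μ', ν', h])
  exact congrArg ((↑) : ProbabilityMeasure E → Measure E)
    (tendsto_nhds_unique tendsto_const_nhds hlim)

end LipschitzIntegral

section Discretization

variable {X : Type*} [MeasurableSpace X] {ι : Type*} [Fintype ι]

/-- Given a finite partition of unity `φ`, the measure `μ` with its `φ i`-part collapsed to the
point `x i`. -/
def discretize (φ : ι → X → ℝ≥0) (x : ι → X) (μ : Measure X) : Measure X :=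
  ∑ i, (∫⁻ y, φ i y ∂μ) • Measure.dirac (x i)

lemma isCoupling_discretize {φ : ι → X → ℝ≥0}
    (hφ : ∀ i, Measurable (φ i)) (hφ1 : ∀ y, ∑ i, φ i y = 1) (x : ι → X) (μ : Measure X) :
    IsCoupling (∑ i, (μ.withDensity fun y => φ i y).map fun y => (y, x i)) μ
      (discretize φ x μ) := by
  have hφm : ∀ i, Measurable fun y => (φ i y : ℝ≥0∞) := fun i => (hφ i).coe_nnreal_ennreal
  have hpair : ∀ i, Measurable fun y : X => (y, x i) := fun i => by fun_prop
  constructor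
  · rw [Measure.map_finset_sum measurable_fst.aemeasurable]
    simp only [Measure.map_map measurable_fst (hpair _), Function.comp_def, Measure.map_id']
    ext s hs
    simp only [Measure.finsetSum_apply, withDensity_apply _ hs]
    rw [← lintegral_finsetSum _ fun i _ => hφm i]
    simp [← ENNReal.ofNNReal_finsetSum, hφ1]
  · rw [Measure.map_finset_sum measurable_snd.aemeasurable]
    simp only [Measure.map_map measurable_snd (hpair _), Function.comp_def, Measure.map_const,
      withDensity_apply _ MeasurableSet.univ, Measure.restrict_univ]
    rfl

lemma ae_discretize [MeasurableSingletonClass X] (φ : ι → X → ℝ≥0) (x : ι → X) (μ : Measure X) :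
    ∀ᵐ y ∂discretize φ x μ, ∃ i, x i = y :=
  ae_finsetSum_measure_iff.2 fun _ _ => Measure.ae_smul_measure (by simp) _

lemma ae_discretize_prod_le_sum [MeasurableSingletonClass X] (φ : ι → X → ℝ≥0) (x : ι → X)
    (f : X → X → ℝ≥0∞) (μ ν : Measure X) :
    ∀ᵐ q ∂(discretize φ x μ).prod (discretize φ x ν), f q.1 q.2 ≤ ∑ i, ∑ j, f (x i) (x j) := by
  filter_upwards [Measure.quasiMeasurePreserving_fst.ae (ae_discretize φ x μ),
    Measure.quasiMeasurePreserving_snd.ae (ae_discretize φ x ν)] with q ⟨i, hi⟩ ⟨j, hj⟩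
  rw [← hi, ← hj]
  exact (Finset.single_le_sum (f := fun j => f (x i) (x j)) (fun _ _ => zero_le)
    (Finset.mem_univ j)).trans (Finset.single_le_sum (f := fun i => ∑ j, f (x i) (x j))
      (fun _ _ => zero_le) (Finset.mem_univ i))

lemma isProbabilityMeasure_discretize {φ : ι → X → ℝ≥0}
    (hφ : ∀ i, Measurable (φ i)) (hφ1 : ∀ y, ∑ i, φ i y = 1) (x : ι → X) (μ : Measure X)
    [IsProbabilityMeasure μ] : IsProbabilityMeasure (discretize φ x μ) := by
  have h := isCoupling_discretize hφ hφ1 x μ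
  have := h.isProbabilityMeasure
  rw [← h.2]
  exact Measure.isProbabilityMeasure_map measurable_snd.aemeasurable

variable {E : Type*} [NormedAddCommGroup E] [NormedSpace ℝ E] [FiniteDimensional ℝ E] {c : E → ℝ}

lemma IsNormLike.exists_finset_cover (hc : IsNormLike c) (r : ℝ) {ε : ℝ} (hε : 0 < ε) :
    ∃ t : Finset E, ∀ y, c y ≤ r → ∃ x ∈ t, c (y - x) < ε := by
  obtain ⟨M, hM₀, hM⟩ := hc.exists_norm_le
  have hcc := hc.continuous
  have hcompact : IsCompact {y | c y ≤ r} :=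
    (isCompact_closedBall (0 : E) (M * r)).of_isClosed_subset
      (isClosed_le hcc continuous_const) fun y hy => by
        simpa using (hM y).trans (by gcongr; exact hy)
  obtain ⟨t, ht⟩ := hcompact.elim_finite_subcover (fun x => {y | c (y - x) < ε})
    (fun x => isOpen_lt (by fun_prop) continuous_const)
    fun y _ => Set.mem_iUnion.2 ⟨y, by simpa [hc.map_zero] using hε⟩
  exact ⟨t, fun y hy => by simpa using ht hy⟩

lemma exists_partition (hc : IsNormLike c) {ε : ℝ} (hε : 0 < ε) :
    ∃ (t : Finset E) (φ : Option t → E → ℝ≥0) (x : Option t → E), (∀ i, Continuous (φ i)) ∧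
      (∀ y, ∑ i, φ i y = 1) ∧ ∀ i y, φ i y ≠ 0 → c (y - x i) ≤ ε * 1 + ε * c y ^ 2 := by
  have hcc := hc.continuous
  obtain ⟨t, ht⟩ := hc.exists_finset_cover ε⁻¹ hε
  let U : Option t → Set E := fun i => i.elim {y | ε⁻¹ < c y} fun x => {y | c (y - x) < ε}
  have hU : ∀ i, IsOpen (U i) := by
    rintro (_ | x)
    exacts [isOpen_lt continuous_const hcc, isOpen_lt (by fun_prop) continuous_const]
  have hcover : ∀ y, y ∈ ⋃ i, U i := fun y => by
    rw [Set.mem_iUnion]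
    by_cases hy : ε⁻¹ < c y
    · exact ⟨none, hy⟩
    · obtain ⟨z, hz, hyz⟩ := ht y (not_lt.1 hy)
      exact ⟨some ⟨z, hz⟩, hyz⟩
  obtain ⟨φ, hφU⟩ := PartitionOfUnity.exists_isSubordinate isClosed_univ U hU fun y _ => hcover y
  have hone : ∀ y, ∑ i, φ i y = 1 := fun y => by
    rw [← finsum_eq_sum_of_fintype]
    exact φ.sum_eq_one (Set.mem_univ y)
  refine ⟨t, fun i y => (φ i y).toNNReal, fun i => i.elim 0 (↑), fun i => ?_, fun y => ?_, ?_⟩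
  · fun_prop
  · rw [← Real.toNNReal_sum_of_nonneg fun i _ => φ.nonneg i y, hone, Real.toNNReal_one]
  · intro i y hy
    have hyU : y ∈ U i := hφU i (subset_tsupport _ fun h => hy (by simp [h]))
    have hcy := hc.nonneg y
    rcases i with _ | x
    · have hy' : 1 ≤ ε * c y := by
        rw [← inv_le_iff_one_le_mul₀' hε]
        exact le_of_lt hyU
      simp only [Option.elim_none, sub_zero]
      nlinarith
    · have hy' : c (y - x) < ε := hyU
      simp only [Option.elim_some]
      nlinarith [sq_nonneg (c y)]

variable [MeasurableSpace E] [BorelSpace E] {φ : ι → E → ℝ≥0} {x : ι → E}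

lemma wasserstein_discretize_le (hc : IsNormLike c) (hφ : ∀ i, Continuous (φ i))
    (hφ1 : ∀ y, ∑ i, φ i y = 1) {ε : ℝ} (hε : 0 ≤ ε)
    (hφx : ∀ i y, φ i y ≠ 0 → c (y - x i) ≤ ε * 1 + ε * c y ^ 2) (μ : Measure E)
    [IsProbabilityMeasure μ] :
    wasserstein c μ (discretize φ x μ) ≤ .ofReal ε * (1 + eLpNorm c 4 μ ^ 2) := by
  have hπ := isCoupling_discretize (fun i => (hφ i).measurable) hφ1 x μ
  set π := ∑ i, (μ.withDensity fun y => φ i y).map fun y => (y, x i)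
  have := hπ.isProbabilityMeasure
  have hcm := hc.measurable
  have hbound : ∀ᵐ q ∂π, |c (q.1 - q.2)| ≤ ε * 1 + ε * c q.1 ^ 2 := by
    simp only [abs_of_nonneg (hc.nonneg _)]
    have hmeas : MeasurableSet {q : E × E | c (q.1 - q.2) ≤ ε * 1 + ε * c q.1 ^ 2} :=
      measurableSet_le hc.measurable_fst_sub_snd (by fun_prop)
    refine ae_finsetSum_measure_iff.2 fun i _ => ?_
    rw [ae_map_iff (by fun_prop) hmeas, ae_withDensity_iff (hφ i).measurable.coe_nnreal_ennreal]
    exact ae_of_all _ fun y hy => hφx i y (by simpa using hy)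
  have hsq : eLpNorm (fun q : E × E => c q.1 ^ 2) 2 π = eLpNorm c 4 μ ^ 2 := by
    rw [hπ.eLpNorm_comp_fst (f := fun y => c y ^ 2) (hcm.pow_const 2)]
    have := eLpNorm_norm_rpow (p := 2) (μ := μ) c (q := 2) two_pos
    norm_num at this
    exact this
  refine (wasserstein_le hπ).trans ((eLpNorm_le_mul_add_mul one_le_two
    aestronglyMeasurable_const (h := fun q => c q.1 ^ 2)
    ((hcm.comp measurable_fst).pow_const 2).aestronglyMeasurable hε hε hbound).trans_eq ?_)
  rw [hsq, eLpNorm_const _ two_ne_zero (NeZero.ne π), mul_add]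
  simp

end Discretization

section CommonPart

variable {E : Type*} [NormedAddCommGroup E] [NormedSpace ℝ E] [FiniteDimensional ℝ E]
  [MeasurableSpace E] [BorelSpace E] {c : E → ℝ} {μ ν : Measure E}

lemma measure_sub_smul_univ {X : Type*} [MeasurableSpace X] {μ ν : Measure X}
    [IsProbabilityMeasure μ] [IsProbabilityMeasure ν] {η : ℝ≥0} (hη : η ≤ 1)
    (h : (1 - η) • ν ≤ μ) : (μ - (1 - η) • ν) Set.univ = η := by
  rw [Measure.sub_apply MeasurableSet.univ h]
  simp [ENNReal.smul_def, ENNReal.sub_sub_cancel, hη]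

lemma isCoupling_sub_prod_add_map_diag {X : Type*} [MeasurableSpace X] {μ ν : Measure X}
    [IsProbabilityMeasure μ] [IsProbabilityMeasure ν] {η : ℝ≥0} (hη : η ≤ 1) (h : (1 - η) • ν ≤ μ) :
    IsCoupling ((μ - (1 - η) • ν).prod ν + (1 - η) • ν.map fun y => (y, y)) μ ν := by
  have hdiag : Measurable fun y : X => (y, y) := by fun_prop
  constructor
  · rw [Measure.map_add _ _ measurable_fst, Measure.map_smul,
      Measure.map_map measurable_fst hdiag, Measure.map_fst_prod, measure_univ, one_smul]
    exact (congrArg _ (by rw [Function.comp_def, Measure.map_id'])).trans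
      (Measure.sub_add_cancel_of_le h)
  · rw [Measure.map_add _ _ measurable_snd, Measure.map_smul,
      Measure.map_map measurable_snd hdiag, Measure.map_snd_prod, measure_sub_smul_univ hη h]
    have hν : (η : ℝ≥0) • ν + (1 - η) • ν = ν := by
      rw [← add_smul, add_tsub_cancel_of_le hη, one_smul]
    exact (congrArg _ (by rw [Function.comp_def, Measure.map_id'])).trans hν

-- The common part `(1 - η) • ν` stays put, so only mass `η` is moved.
lemma wasserstein_le_of_smul_le [IsProbabilityMeasure μ] [IsProbabilityMeasure ν]
    (hc : IsNormLike c) {D : ℝ≥0∞} (hD : ∀ᵐ q ∂μ.prod ν, .ofReal (c (q.1 - q.2)) ≤ D) {η : ℝ≥0}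
    (hη : η ≤ 1) (h : (1 - η) • ν ≤ μ) :
    wasserstein c μ ν ≤ D * (η : ℝ≥0∞) ^ (1 / 2 : ℝ) := by
  have hdiag : Measurable fun y : E => (y, y) := by fun_prop
  have hcost : Measurable fun q : E × E => ‖c (q.1 - q.2)‖ₑ ^ (2 : ℝ) :=
    hc.measurable_fst_sub_snd.enorm.pow_const _
  have hD' : ∀ᵐ q ∂(μ - (1 - η) • ν).prod ν, ‖c (q.1 - q.2)‖ₑ ^ (2 : ℝ) ≤ D ^ (2 : ℝ) := by
    have hac : (μ - (1 - η) • ν).prod ν ≪ μ.prod ν :=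
      Measure.sub_le.absolutelyContinuous.prod .rfl
    filter_upwards [hac.ae_le hD] with q hq
    rw [Real.enorm_of_nonneg (hc.nonneg _)]
    exact ENNReal.rpow_le_rpow hq two_pos.le
  have hmass : (μ - (1 - η) • ν) Set.univ = η := measure_sub_smul_univ hη h
  refine (wasserstein_le (isCoupling_sub_prod_add_map_diag hη h)).trans ?_
  rw [eLpNorm_eq_lintegral_rpow_enorm_toReal two_ne_zero ENNReal.ofNat_ne_top]
  simp only [ENNReal.toReal_ofNat]
  calc _ ≤ (D ^ (2 : ℝ) * η) ^ (1 / 2 : ℝ) := by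
        gcongr
        rw [lintegral_add_measure, lintegral_smul_measure, lintegral_map hcost hdiag]
        simpa [hc.map_zero, ← Set.univ_prod_univ, hmass] using lintegral_mono_ae hD'
    _ = D * (η : ℝ≥0∞) ^ (1 / 2 : ℝ) := by
        rw [ENNReal.mul_rpow_of_nonneg _ _ (by norm_num), ← ENNReal.rpow_mul]
        norm_num

end CommonPart

section Convergence

variable {E : Type*} [NormedAddCommGroup E] [NormedSpace ℝ E] [FiniteDimensional ℝ E]
  [MeasurableSpace E] [BorelSpace E] {c : E → ℝ} {ι : Type*} {l : Filter ι}
  {P : ι → ProbabilityMeasure E} {Q : ProbabilityMeasure E}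

lemma tendsto_wasserstein_discretize {κ : Type*} [Fintype κ] (hc : IsNormLike c)
    (h : Tendsto P l (𝓝 Q)) {φ : κ → E → ℝ≥0} (hφ : ∀ i, Continuous (φ i))
    (hφ1 : ∀ y, ∑ i, φ i y = 1) (x : κ → E) :
    Tendsto (fun i => wasserstein c (discretize φ x (P i : Measure E)) (discretize φ x Q)) l
      (𝓝 0) := by
  set D : ℝ≥0∞ := ∑ i, ∑ j, .ofReal (c (x i - x j))
  have hprob : ∀ μ : ProbabilityMeasure E, IsProbabilityMeasure (discretize φ x (μ : Measure E)) :=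
    fun μ => isProbabilityMeasure_discretize (fun i => (hφ i).measurable) hφ1 x _
  have hweights : ∀ η : ℝ≥0, 0 < η → ∀ᶠ i in l, ∀ k,
      (1 - η : ℝ≥0) * ∫⁻ y, φ k y ∂(Q : Measure E) ≤ ∫⁻ y, φ k y ∂(P i : Measure E) := by
    refine fun η hη => eventually_all.2 fun k =>
      eventually_mul_lintegral_le h (hφ k) (N := 1) (fun y => ?_) hη
    exact (Finset.single_le_sum (f := fun k => φ k y) (fun _ _ => zero_le)
      (Finset.mem_univ k)).trans_eq (hφ1 y)
  refine ENNReal.tendsto_nhds_zero.2 fun δ hδ => ?_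
  obtain ⟨η, hη, hηδ⟩ : ∃ η : ℝ≥0, 0 < η ∧ D * (η : ℝ≥0∞) ^ (1 / 2 : ℝ) ≤ δ := by
    have hD' : D ≠ ∞ := ENNReal.sum_ne_top.2 fun i _ => ENNReal.sum_ne_top.2 fun j _ =>
      ENNReal.ofReal_ne_top
    obtain ⟨r, hr, hrδ⟩ := ENNReal.exists_nnreal_pos_mul_lt hD' hδ.ne'
    refine ⟨r ^ 2, by positivity, ?_⟩
    rw [ENNReal.coe_pow, ← ENNReal.rpow_natCast, ← ENNReal.rpow_mul, mul_comm]
    simpa using hrδ.le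
  refine (hweights (min η 1) (by positivity)).mono fun i hi => ?_
  have := hprob (P i)
  have := hprob Q
  have hD := ae_discretize_prod_le_sum φ x (fun y z => .ofReal (c (y - z))) (P i) Q
  refine (wasserstein_le_of_smul_le hc hD (min_le_right η 1) ?_).trans
    (le_trans (by gcongr; exact min_le_left _ _) hηδ)
  rw [discretize, Finset.smul_sum]
  refine Finset.sum_le_sum fun k _ => ?_
  rw [← smul_assoc]
  exact Measure.le_intro fun s _ _ => mul_le_mul_left (hi k) _

theorem tendsto_wasserstein_of_tendsto (hc : IsNormLike c) (h : Tendsto P l (𝓝 Q)) {K : ℝ≥0∞}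
    (hK : K ≠ ∞) (hP : ∀ᶠ i in l, eLpNorm c 4 (P i : Measure E) ≤ K) :
    Tendsto (fun i => wasserstein c (P i : Measure E) Q) l (𝓝 0) := by
  rcases l.eq_or_neBot with rfl | hl
  · exact tendsto_bot
  have hQ := eLpNorm_le_of_tendsto h hc.continuous (by norm_num) ENNReal.ofNat_ne_top hP
  refine ENNReal.tendsto_nhds_zero.2 fun δ hδ => ?_
  have hδ3 : δ / 3 ≠ 0 := (ENNReal.div_pos hδ.ne' ENNReal.ofNat_ne_top).ne'
  obtain ⟨ε, hε, hεδ⟩ := ENNReal.exists_nnreal_pos_mul_lt (a := 1 + K ^ 2)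
    (by simp [hK]) hδ3
  obtain ⟨t, φ, x, hφ, hφ1, hφx⟩ := exists_partition hc (NNReal.coe_pos.2 hε)
  have hdisc : ∀ μ : ProbabilityMeasure E, eLpNorm c 4 (μ : Measure E) ≤ K →
      wasserstein c (μ : Measure E) (discretize φ x μ) ≤ δ / 3 := fun μ hμ =>
    (wasserstein_discretize_le hc hφ hφ1 ε.coe_nonneg hφx μ).trans
      (le_trans (by rw [ENNReal.ofReal_coe_nnreal]; gcongr) hεδ.le)
  filter_upwards [hP, ENNReal.tendsto_nhds_zero.1 (tendsto_wasserstein_discretize hc h hφ hφ1 x)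
    (δ / 3) (pos_iff_ne_zero.2 hδ3)] with i hi hi'
  have hprob : ∀ μ : ProbabilityMeasure E, IsProbabilityMeasure (discretize φ x (μ : Measure E)) :=
    fun μ => isProbabilityMeasure_discretize (fun i => (hφ i).measurable) hφ1 x _
  have := hprob (P i)
  have := hprob Q
  calc wasserstein c (P i : Measure E) Q
      ≤ wasserstein c (P i : Measure E) (discretize φ x (P i))
        + wasserstein c (discretize φ x (P i : Measure E)) (discretize φ x Q)
        + wasserstein c (discretize φ x (Q : Measure E)) Q :=
        (wasserstein_triangle hc _ (discretize φ x Q) _).trans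
          (by gcongr; exact wasserstein_triangle hc _ _ _)
    _ ≤ δ / 3 + δ / 3 + δ / 3 := by
        gcongr
        · exact hdisc _ hi
        · rw [wasserstein_comm hc]
          exact hdisc _ hQ
    _ = δ := ENNReal.add_thirds δ

end Convergence

section FourthMoment

variable {E : Type*} [NormedAddCommGroup E] [InnerProductSpace ℝ E] [MeasurableSpace E]
  [FiniteDimensional ℝ E] {ω : Measure E}

/-- A centred law with finite fourth moment. -/
structure IsNoise {E : Type*} [NormedAddCommGroup E] [NormedSpace ℝ E] [MeasurableSpace E]
    (ω : Measure E) : Prop where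
  memLp : MemLp id 4 ω
  integral_eq_zero : ∫ x, x ∂ω = 0

lemma norm_add_pow_four_le {E : Type*} [NormedAddCommGroup E] [InnerProductSpace ℝ E] (x y : E) :
    ‖x + y‖ ^ 4 ≤ ‖x‖ ^ 4 + 4 * ‖x‖ ^ 2 * inner ℝ x y + 8 * ‖x‖ ^ 2 * ‖y‖ ^ 2 + 3 * ‖y‖ ^ 4 := by
  have hsq := norm_add_sq_real x y
  have hinner := abs_le.1 (abs_real_inner_le_norm x y)
  have hcross : 0 ≤ ‖y‖ ^ 2 * (‖x‖ - ‖y‖) ^ 2 := by positivity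
  have hcs : inner ℝ x y ^ 2 ≤ (‖x‖ * ‖y‖) ^ 2 := sq_le_sq' hinner.1 hinner.2
  have hy : ‖y‖ ^ 2 * inner ℝ x y ≤ ‖y‖ ^ 2 * (‖x‖ * ‖y‖) := by gcongr; exact hinner.2
  calc ‖x + y‖ ^ 4 = (‖x‖ ^ 2 + 2 * inner ℝ x y + ‖y‖ ^ 2) ^ 2 := by rw [← hsq]; ring
    _ ≤ _ := by linarith

lemma IsNoise.integral_norm_add_pow_four_le [IsProbabilityMeasure ω] (h : IsNoise ω) (x : E) :
    ∫ y, ‖x + y‖ ^ 4 ∂ω ≤ (‖x‖ ^ 2 + 4 * (eLpNorm id 4 ω).toReal ^ 2) ^ 2 := by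
  set N := (eLpNorm id 4 ω).toReal
  have hmem2 : MemLp id 2 ω := h.memLp.mono_exponent (by norm_num)
  have hi1 : Integrable (fun y => inner ℝ x y) ω :=
    (hmem2.integrable one_le_two).const_inner x
  have hi2 : Integrable (fun y => ‖y‖ ^ 2) ω := hmem2.integrable_norm_pow two_ne_zero
  have hi4 : Integrable (fun y => ‖y‖ ^ 4) ω := h.memLp.integrable_norm_pow (by norm_num)
  have hm4 : ∫ y, ‖y‖ ^ 4 ∂ω = N ^ 4 :=
    integral_norm_pow_eq_toReal_eLpNorm_pow four_ne_zero h.memLp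
  have hm2 : ∫ y, ‖y‖ ^ 2 ∂ω ≤ N ^ 2 := by
    rw [show ∫ y, ‖y‖ ^ 2 ∂ω = (eLpNorm id 2 ω).toReal ^ 2 from
      integral_norm_pow_eq_toReal_eLpNorm_pow two_ne_zero hmem2]
    gcongr
    refine ENNReal.toReal_mono h.memLp.eLpNorm_ne_top ?_
    exact eLpNorm_le_eLpNorm_of_exponent_le (by norm_num) h.memLp.1
  have hm1 : ∫ y, inner ℝ x y ∂ω = 0 := by
    simpa [h.integral_eq_zero] using integral_inner (𝕜 := ℝ) (hmem2.integrable one_le_two) x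
  calc ∫ y, ‖x + y‖ ^ 4 ∂ω
      ≤ ∫ y, (‖x‖ ^ 4 + 4 * ‖x‖ ^ 2 * inner ℝ x y + 8 * ‖x‖ ^ 2 * ‖y‖ ^ 2 + 3 * ‖y‖ ^ 4) ∂ω :=
        integral_mono_of_nonneg (ae_of_all _ fun y => by positivity)
          (((integrable_const _).add (hi1.const_mul _)).add (hi2.const_mul _) |>.add
            (hi4.const_mul _)) (ae_of_all _ fun y => norm_add_pow_four_le x y)
    _ = ‖x‖ ^ 4 + 8 * ‖x‖ ^ 2 * ∫ y, ‖y‖ ^ 2 ∂ω + 3 * N ^ 4 := by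
        rw [integral_add (by fun_prop) (by fun_prop), integral_add (by fun_prop) (by fun_prop),
          integral_add (by fun_prop) (by fun_prop)]
        simp [integral_const_mul, hm1, hm4]
    _ ≤ ‖x‖ ^ 4 + 8 * ‖x‖ ^ 2 * N ^ 2 + 3 * N ^ 4 := by gcongr
    _ ≤ (‖x‖ ^ 2 + 4 * N ^ 2) ^ 2 := by nlinarith [sq_nonneg (N ^ 2)]

lemma eLpNorm_natCast_pow_eq_lintegral {X V : Type*} [MeasurableSpace X] [ENorm V]
    (f : X → V) (μ : Measure X) {n : ℕ} (hn : n ≠ 0) :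
    eLpNorm f n μ ^ n = ∫⁻ x, ‖f x‖ₑ ^ n ∂μ := by
  have := eLpNorm_nnreal_pow_eq_lintegral (f := f) (μ := μ) (p := n) (by exact_mod_cast hn)
  simpa using this

lemma IsNoise.lintegral_enorm_add_pow_four_le [IsProbabilityMeasure ω] (h : IsNoise ω) (x : E) :
    ∫⁻ y, ‖x + y‖ₑ ^ 4 ∂ω ≤ (‖x‖ₑ ^ 2 + 4 * eLpNorm id 4 ω ^ 2) ^ 2 := by
  have hint : Integrable (fun y => ‖x + y‖ ^ 4) ω :=
    ((memLp_const x).add h.memLp).integrable_norm_pow four_ne_zero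
  calc ∫⁻ y, ‖x + y‖ₑ ^ 4 ∂ω = ENNReal.ofReal (∫ y, ‖x + y‖ ^ 4 ∂ω) := by
        rw [ofReal_integral_eq_lintegral_ofReal hint (ae_of_all _ fun y => by positivity)]
        simp only [ENNReal.ofReal_pow (norm_nonneg _), ofReal_norm]
    _ ≤ ENNReal.ofReal ((‖x‖ ^ 2 + 4 * (eLpNorm id 4 ω).toReal ^ 2) ^ 2) :=
        ENNReal.ofReal_le_ofReal (h.integral_norm_add_pow_four_le x)
    _ = (‖x‖ₑ ^ 2 + 4 * eLpNorm id 4 ω ^ 2) ^ 2 := by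
        rw [ENNReal.ofReal_pow (by positivity), ENNReal.ofReal_add (by positivity) (by positivity),
          ENNReal.ofReal_mul (by norm_num), ENNReal.ofReal_pow (norm_nonneg _), ofReal_norm,
          ENNReal.ofReal_pow ENNReal.toReal_nonneg,
          ENNReal.ofReal_toReal h.memLp.eLpNorm_ne_top, ENNReal.ofReal_ofNat]

variable [BorelSpace E]

lemma IsNoise.map_smul (h : IsNoise ω) (r : ℝ) : IsNoise (ω.map (r • ·)) := by
  have hr : AEMeasurable (r • · : E → E) ω := by fun_prop
  refine ⟨(memLp_map_measure_iff (by fun_prop) hr).2 (h.memLp.const_smul r), ?_⟩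
  rw [integral_map hr (by fun_prop), integral_smul, h.integral_eq_zero, smul_zero]

lemma eLpNorm_id_map_smul (ω : Measure E) (r : ℝ) (p : ℝ≥0∞) :
    eLpNorm id p (ω.map (r • ·)) = ‖r‖ₑ * eLpNorm id p ω := by
  rw [eLpNorm_map_measure (by fun_prop) (by fun_prop)]
  exact eLpNorm_const_smul r id p ω

lemma IsNoise.eLpNorm_add_sq_le {S : Type*} [MeasurableSpace S] {ρ : Measure S}
    [IsProbabilityMeasure ρ] [IsProbabilityMeasure ω] (h : IsNoise ω) {f : S → E}
    (hf : Measurable f) :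
    eLpNorm (fun q : S × E => f q.1 + q.2) 4 (ρ.prod ω) ^ 2
      ≤ eLpNorm f 4 ρ ^ 2 + 4 * eLpNorm id 4 ω ^ 2 := by
  let b : ℝ≥0∞ := 4 * eLpNorm id 4 ω ^ 2
  have hsq : (eLpNorm (fun q : S × E => f q.1 + q.2) 4 (ρ.prod ω) ^ 2) ^ 2
      ≤ eLpNorm (fun x => ‖f x‖ₑ ^ (2 : ℝ) + b) 2 ρ ^ 2 := by
    calc (eLpNorm (fun q : S × E => f q.1 + q.2) 4 (ρ.prod ω) ^ 2) ^ 2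
        = ∫⁻ x, ∫⁻ y, ‖f x + y‖ₑ ^ 4 ∂ω ∂ρ := by
          rw [← pow_mul]
          refine (eLpNorm_natCast_pow_eq_lintegral _ _ four_ne_zero).trans ?_
          exact lintegral_prod _ (by fun_prop)
      _ ≤ ∫⁻ x, (‖f x‖ₑ ^ 2 + b) ^ 2 ∂ρ :=
          lintegral_mono fun x => h.lintegral_enorm_add_pow_four_le (f x)
      _ = eLpNorm (fun x => ‖f x‖ₑ ^ (2 : ℝ) + b) 2 ρ ^ 2 := by
          simpa using (eLpNorm_natCast_pow_eq_lintegral (fun x => ‖f x‖ₑ ^ (2 : ℝ) + b) ρ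
            two_ne_zero).symm
  calc eLpNorm (fun q : S × E => f q.1 + q.2) 4 (ρ.prod ω) ^ 2
      ≤ eLpNorm (fun x => ‖f x‖ₑ ^ (2 : ℝ) + b) 2 ρ :=
        (ENNReal.pow_le_pow_left_iff two_ne_zero).1 hsq
    _ ≤ eLpNorm (fun x => ‖f x‖ₑ ^ (2 : ℝ)) 2 ρ + eLpNorm (fun _ => b) 2 ρ :=
        eLpNorm_add_le (by fun_prop) (by fun_prop) one_le_two
    _ = eLpNorm f 4 ρ ^ 2 + b := by
        rw [eLpNorm_enorm_rpow f two_pos, eLpNorm_const b two_ne_zero (NeZero.ne ρ)]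
        norm_num

end FourthMoment

section Chain

variable {S S' E : Type*} [MeasurableSpace S] [MeasurableSpace S'] [MeasurableSpace E]
  {f : S × E → S} {f' : S' × E → S'} {ω : Measure E} {P : Measure S}

/-- The law after `k` steps of the random recursion `s ↦ f (s, w)` driven by i.i.d. noise of law
`ω`, started from the law `P`. -/
def chainLaw (f : S × E → S) (ω : Measure E) (P : Measure S) : ℕ → Measure S
  | 0 => P
  | k + 1 => ((chainLaw f ω P k).prod ω).map f

lemma chainLaw_of_stationary (h : (P.prod ω).map f = P) (k : ℕ) : chainLaw f ω P k = P := by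
  induction k with
  | zero => rfl
  | succ k ih => rw [chainLaw, ih, h]

variable [IsProbabilityMeasure ω]

lemma isProbabilityMeasure_chainLaw [IsProbabilityMeasure P] (hf : Measurable f) (k : ℕ) :
    IsProbabilityMeasure (chainLaw f ω P k) := by
  induction k with
  | zero => assumption
  | succ k ih => exact Measure.isProbabilityMeasure_map hf.aemeasurable

lemma map_chainLaw [IsProbabilityMeasure P] (hf : Measurable f) (hf' : Measurable f') {g : S → S'}
    (hg : Measurable g) (hfg : ∀ s w, g (f (s, w)) = f' (g s, w)) (k : ℕ) :
    (chainLaw f ω P k).map g = chainLaw f' ω (P.map g) k := by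
  induction k with
  | zero => rfl
  | succ k ih =>
    have := isProbabilityMeasure_chainLaw (ω := ω) (P := P) hf k
    have hprod : (chainLaw f' ω (P.map g) k).prod ω
        = ((chainLaw f ω P k).prod ω).map (Prod.map g id) := by
      rw [← ih, ← Measure.map_prod_map _ _ hg measurable_id, Measure.map_id]
    rw [chainLaw, chainLaw, hprod, Measure.map_map hg hf,
      Measure.map_map hf' (hg.prodMap measurable_id)]
    congr 1
    funext p
    exact hfg p.1 p.2

lemma chainLaw_prod [IsProbabilityMeasure P] (hf : Measurable f) (R : Measure S')
    [IsProbabilityMeasure R] (k : ℕ) :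
    chainLaw (fun q : (S' × S) × E => (q.1.1, f (q.1.2, q.2))) ω (R.prod P) k
      = R.prod (chainLaw f ω P k) := by
  induction k with
  | zero => rfl
  | succ k ih =>
    have := isProbabilityMeasure_chainLaw (ω := ω) (P := P) hf k
    have hsplit : (fun q : (S' × S) × E => (q.1.1, f (q.1.2, q.2)))
        = Prod.map id f ∘ MeasurableEquiv.prodAssoc := rfl
    rw [chainLaw, chainLaw, ih, hsplit, ← Measure.map_map (measurable_id.prodMap hf)
      (MeasurableEquiv.measurable _), Measure.prodAssoc_prod,
      ← Measure.map_prod_map _ _ measurable_id hf, Measure.map_id]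

/-- The law of the sum of `k` independent random elements of law `ω`. -/
def sumLaw {M : Type*} [AddMonoid M] [MeasurableSpace M] (ω : Measure M) : ℕ → Measure M :=
  chainLaw (fun p => p.1 + p.2) ω (.dirac 0)

instance {M : Type*} [AddMonoid M] [MeasurableSpace M] [MeasurableAdd₂ M] {ω : Measure M}
    [IsProbabilityMeasure ω] (k : ℕ) : IsProbabilityMeasure (sumLaw ω k) :=
  isProbabilityMeasure_chainLaw (by fun_prop) k

end Chain

section LinearRecursion

variable {E : Type*} [NormedAddCommGroup E] [InnerProductSpace ℝ E] [MeasurableSpace E]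
  [BorelSpace E] [FiniteDimensional ℝ E] {ω : Measure E} [IsProbabilityMeasure ω]

lemma IsNoise.eLpNorm_chainLaw_succ_sq_le (h : IsNoise ω) (r : ℝ) (k : ℕ) :
    eLpNorm id 4 (chainLaw (fun p : E × E => r • p.1 + p.2) ω (.dirac 0) (k + 1)) ^ 2
      ≤ ‖r‖ₑ ^ 2 * eLpNorm id 4 (chainLaw (fun p : E × E => r • p.1 + p.2) ω (.dirac 0) k) ^ 2
        + 4 * eLpNorm id 4 ω ^ 2 := by
  have := isProbabilityMeasure_chainLaw (f := fun p : E × E => r • p.1 + p.2) (ω := ω)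
    (P := .dirac 0) (by fun_prop) k
  rw [chainLaw, eLpNorm_map_measure (by fun_prop) (by fun_prop), ← mul_pow]
  refine (h.eLpNorm_add_sq_le (f := fun x : E => r • x) (by fun_prop)).trans_eq ?_
  rw [show (fun x : E => r • x) = r • id from rfl, eLpNorm_const_smul]

lemma IsNoise.eLpNorm_chainLaw_smul_add_le (h : IsNoise ω) {α : ℝ} (h0 : 0 ≤ α) (h1 : α ≤ 1)
    (k : ℕ) : eLpNorm id 4 (chainLaw (fun p : E × E => (1 - α) • p.1 + p.2)
      (ω.map (√α • ·)) (.dirac 0) k) ≤ 2 * eLpNorm id 4 ω := by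
  have : IsProbabilityMeasure (ω.map (√α • ·)) := Measure.isProbabilityMeasure_map (by fun_prop)
  rw [← ENNReal.pow_le_pow_left_iff two_ne_zero]
  induction k with
  | zero => simp [chainLaw]
  | succ k ih =>
    have hα : ‖1 - α‖ₑ ^ 2 * 4 + 4 * ‖√α‖ₑ ^ 2 ≤ 4 := by
      rw [Real.enorm_of_nonneg (sub_nonneg.2 h1), Real.enorm_of_nonneg (Real.sqrt_nonneg α),
        ← ENNReal.ofReal_pow (sub_nonneg.2 h1), ← ENNReal.ofReal_pow (Real.sqrt_nonneg α),
        Real.sq_sqrt h0, ← ENNReal.ofReal_ofNat 4, ← ENNReal.ofReal_mul (by positivity),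
        ← ENNReal.ofReal_mul (by positivity), ← ENNReal.ofReal_add (by positivity) (by positivity)]
      exact ENNReal.ofReal_le_ofReal (by nlinarith)
    calc _ ≤ _ := (h.map_smul √α).eLpNorm_chainLaw_succ_sq_le (1 - α) k
      _ ≤ ‖1 - α‖ₑ ^ 2 * (2 * eLpNorm id 4 ω) ^ 2 + 4 * (‖√α‖ₑ * eLpNorm id 4 ω) ^ 2 := by
        rw [eLpNorm_id_map_smul]; gcongr
      _ = (‖1 - α‖ₑ ^ 2 * 4 + 4 * ‖√α‖ₑ ^ 2) * eLpNorm id 4 ω ^ 2 := by ring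
      _ ≤ (2 * eLpNorm id 4 ω) ^ 2 := by
        rw [mul_pow]; gcongr; exact hα.trans_eq (by norm_num)

lemma IsNoise.eLpNorm_sumLaw_sq_le (h : IsNoise ω) (k : ℕ) :
    eLpNorm id 4 (sumLaw ω k) ^ 2 ≤ 4 * k * eLpNorm id 4 ω ^ 2 := by
  induction k with
  | zero => simp [sumLaw, chainLaw]
  | succ k ih =>
    have hstep := h.eLpNorm_chainLaw_succ_sq_le 1 k
    simp only [one_smul, enorm_one, one_pow, one_mul] at hstep
    calc eLpNorm id 4 (sumLaw ω (k + 1)) ^ 2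
        ≤ eLpNorm id 4 (sumLaw ω k) ^ 2 + 4 * eLpNorm id 4 ω ^ 2 := hstep
      _ ≤ 4 * k * eLpNorm id 4 ω ^ 2 + 4 * eLpNorm id 4 ω ^ 2 := by gcongr
      _ = 4 * ↑(k + 1) * eLpNorm id 4 ω ^ 2 := by push_cast; ring

lemma charFun_sumLaw (ω : Measure E) [IsProbabilityMeasure ω] (k : ℕ) (t : E) :
    charFun (sumLaw ω k) t = charFun ω t ^ k := by
  induction k with
  | zero => simp [sumLaw, chainLaw]
  | succ k ih =>
    have : IsProbabilityMeasure (chainLaw (fun p => p.1 + p.2) ω (.dirac 0) k) :=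
      isProbabilityMeasure_chainLaw (by fun_prop) k
    have hstep : charFun (sumLaw ω (k + 1)) = charFun (sumLaw ω k) * charFun ω :=
      charFun_map_add_prod_eq_mul
    rw [hstep, Pi.mul_apply, ih, pow_succ]

lemma IsNoise.eLpNorm_sumLaw_map_smul_le (h : IsNoise ω) {α τ : ℝ} (hα : 0 ≤ α) {k : ℕ}
    (hk : k * α ≤ τ) :
    eLpNorm id 4 (sumLaw (ω.map (√α • ·)) k) ≤ ENNReal.ofReal (2 * √τ) * eLpNorm id 4 ω := by
  have : IsProbabilityMeasure (ω.map (√α • ·)) := Measure.isProbabilityMeasure_map (by fun_prop)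
  have hτ : 0 ≤ τ := le_trans (by positivity) hk
  have hn : (k : ℝ≥0∞) * ‖√α‖ₑ ^ 2 ≤ ENNReal.ofReal τ := by
    rw [Real.enorm_of_nonneg (Real.sqrt_nonneg α), ← ENNReal.ofReal_pow (Real.sqrt_nonneg α),
      Real.sq_sqrt hα, ← ENNReal.ofReal_natCast, ← ENNReal.ofReal_mul (by positivity)]
    exact ENNReal.ofReal_le_ofReal hk
  rw [← ENNReal.pow_le_pow_left_iff two_ne_zero]
  calc _ ≤ 4 * k * eLpNorm id 4 (ω.map (√α • ·)) ^ 2 := (h.map_smul √α).eLpNorm_sumLaw_sq_le _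
    _ = 4 * (k * ‖√α‖ₑ ^ 2) * eLpNorm id 4 ω ^ 2 := by rw [eLpNorm_id_map_smul]; ring
    _ ≤ 4 * ENNReal.ofReal τ * eLpNorm id 4 ω ^ 2 := by gcongr
    _ = _ := by
      rw [mul_pow, ← ENNReal.ofReal_pow (by positivity), mul_pow, Real.sq_sqrt hτ,
        ENNReal.ofReal_mul (by positivity)]
      norm_num

end LinearRecursion

section CentralLimit

lemma natFloor_div_mul_le {α τ : ℝ} (hα : 0 < α) (hτ : 0 ≤ τ) : ⌊τ / α⌋₊ * α ≤ τ :=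
  (le_div_iff₀ hα).1 (Nat.floor_le (by positivity))

lemma tendsto_natFloor_div_mul {τ : ℝ} (hτ : 0 ≤ τ) :
    Tendsto (fun α : ℝ => (⌊τ / α⌋₊ : ℝ) * α) (𝓝[>] 0) (𝓝 τ) := by
  refine ((tendsto_nat_floor_mul_div_atTop hτ).comp tendsto_inv_nhdsGT_zero).congr fun α => ?_
  simp [div_eq_mul_inv]

lemma tendsto_pow_natFloor_div {φ : ℝ → ℂ} {z : ℂ}
    (h : Tendsto (fun α : ℝ => (φ α - 1) / α) (𝓝[>] 0) (𝓝 z)) {τ : ℝ} (hτ : 0 ≤ τ) :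
    Tendsto (fun α : ℝ => φ α ^ ⌊τ / α⌋₊) (𝓝[>] 0) (𝓝 (Complex.exp (τ * z))) := by
  have hne : ∀ᶠ α : ℝ in 𝓝[>] 0, φ α ≠ 0 := by
    have hφ : Tendsto φ (𝓝[>] 0) (𝓝 1) := by
      have hα : Tendsto (fun α : ℝ => (α : ℂ)) (𝓝[>] 0) (𝓝 0) :=
        (Complex.continuous_ofReal.tendsto' 0 0 Complex.ofReal_zero).mono_left nhdsWithin_le_nhds
      refine tendsto_sub_nhds_zero_iff.1 (((h.mul hα).congr' ?_).trans_eq (by rw [mul_zero]))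
      filter_upwards [self_mem_nhdsWithin] with α (hα : 0 < α)
      exact div_mul_cancel₀ _ (by exact_mod_cast hα.ne')
    exact hφ.eventually_ne one_ne_zero
  have hlog : Tendsto (fun α : ℝ => (α : ℂ)⁻¹ * Complex.log (φ α)) (𝓝[>] 0) (𝓝 z) := by
    have := (Complex.tendsto_mul_log_one_add_of_tendsto (g := fun x => φ x⁻¹ - 1) (t := z) ?_).comp
      tendsto_inv_nhdsGT_zero
    · simpa [Function.comp_def] using this
    · refine (h.comp tendsto_inv_atTop_nhdsGT_zero).congr fun x => ?_
      simp [div_eq_mul_inv, mul_comm]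
  have hexp : Tendsto (fun α : ℝ => Complex.exp (⌊τ / α⌋₊ * Complex.log (φ α))) (𝓝[>] 0)
      (𝓝 (Complex.exp (τ * z))) := by
    refine (Complex.continuous_exp.tendsto _).comp ?_
    refine (((Complex.continuous_ofReal.tendsto τ).comp (tendsto_natFloor_div_mul hτ)).mul
      hlog).congr' ?_
    filter_upwards [self_mem_nhdsWithin] with α (hα : 0 < α)
    have : (α : ℂ) ≠ 0 := by exact_mod_cast hα.ne'
    simp only [Function.comp_apply, Complex.ofReal_mul, Complex.ofReal_natCast]
    field_simp
  refine hexp.congr' ?_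
  filter_upwards [hne] with α hα
  rw [Complex.exp_nat_mul, Complex.exp_log hα]

variable {E : Type*} [NormedAddCommGroup E] [InnerProductSpace ℝ E] [MeasurableSpace E]
  [BorelSpace E] [FiniteDimensional ℝ E] {ω : Measure E}

lemma IsNoise.tendsto_charFun_sub_one_div [IsProbabilityMeasure ω] (h : IsNoise ω) (t : E) :
    Tendsto (fun α : ℝ => (charFun ω (√α • t) - 1) / α) (𝓝[>] 0)
      (𝓝 (-(∫ x, inner ℝ t x ^ 2 ∂ω : ℝ) / 2)) := by
  let X : E → ℝ := fun x => inner ℝ t x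
  have hX : AEMeasurable X ω := by fun_prop
  have : IsProbabilityMeasure (ω.map X) := Measure.isProbabilityMeasure_map hX
  have hω : MemLp id 2 ω := h.memLp.mono_exponent (by norm_num)
  have hmem : MemLp id 2 (ω.map X) :=
    (memLp_map_measure_iff (by fun_prop) hX).2 (hω.const_inner t)
  have hmean : ∫ x, X x ∂ω = 0 := by
    simpa [h.integral_eq_zero] using integral_inner (𝕜 := ℝ) (hω.integrable one_le_two) t
  have hchar : ∀ s : ℝ, charFun (ω.map X) s = charFun ω (s • t) := fun s => by
    rw [charFun_apply_real, charFun_apply, integral_map hX (by fun_prop)]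
    simp [X, real_inner_comm, real_inner_smul_right]
  have htaylor := taylor_isLittleO_univ (x₀ := 0) (contDiff_charFun hmem)
  have hsqrt : Tendsto (fun α : ℝ => √α) (𝓝[>] 0) (𝓝 0) :=
    (Real.continuous_sqrt.tendsto' 0 0 Real.sqrt_zero).mono_left nhdsWithin_le_nhds
  have hlim := ((htaylor.comp_tendsto hsqrt).tendsto_inv_smul_nhds_zero)
  rw [← zero_add (-_ / 2)]
  refine (hlim.add_const _).congr' ?_
  filter_upwards [self_mem_nhdsWithin] with α (hα : 0 < α)
  have hα' : (α : ℂ) ≠ 0 := by exact_mod_cast hα.ne'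
  have hsq : ((√α : ℝ) : ℂ) ^ 2 = α := by rw [← Complex.ofReal_pow, Real.sq_sqrt hα.le]
  simp only [Function.comp_apply, taylorWithinEval_charFun_two_zero hX hmem, hchar, hmean, hsq,
    Pi.pow_apply, X, sub_zero, Real.sq_sqrt hα.le, Complex.ofReal_zero, zero_mul, add_zero,
    Complex.real_smul, Complex.ofReal_inv]
  field_simp
  ring

lemma isNormLike_norm {V : Type*} [NormedAddCommGroup V] [NormedSpace ℝ V] :
    IsNormLike fun x : V => ‖x‖ :=
  ⟨norm_add_le, norm_smul, fun _ => norm_pos_iff.2⟩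

lemma exists_tendsto_of_tendsto_charFun {ι : Type*} {l : Filter ι} [l.NeBot]
    {P : ι → ProbabilityMeasure E} {φ : E → ℂ} {p : ℝ≥0∞} (hp₀ : p ≠ 0) (hp : p ≠ ∞) {K : ℝ≥0∞}
    (hK : K ≠ ∞) (hP : ∀ᶠ i in l, eLpNorm id p (P i : Measure E) ≤ K)
    (hφ : ∀ t, Tendsto (fun i => charFun (P i : Measure E) t) l (𝓝 (φ t))) :
    ∃ Q : ProbabilityMeasure E, Tendsto P l (𝓝 Q) ∧ charFun (Q : Measure E) = φ := by
  have hcluster : ∀ u : Ultrafilter ι, ↑u ≤ l →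
      ∃ Q : ProbabilityMeasure E, Tendsto P u (𝓝 Q) ∧ charFun (Q : Measure E) = φ := by
    intro u hu
    obtain ⟨Q, hQ⟩ := exists_tendsto_of_eLpNorm_le isNormLike_norm hp₀ hp hK u
      ((hP.filter_mono hu).mono fun i hi => (eLpNorm_norm id).trans_le hi)
    refine ⟨Q, hQ, funext fun t => tendsto_nhds_unique ?_ ((hφ t).mono_left hu)⟩
    simp_rw [charFun_eq_integral_innerProbChar]
    exact (ProbabilityMeasure.tendsto_iff_forall_integral_rclike_tendsto ℂ).1 hQ _
  obtain ⟨Q, -, hQφ⟩ := hcluster (Ultrafilter.of l) (Ultrafilter.of_le l)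
  refine ⟨Q, (tendsto_iff_ultrafilter _ _ _).2 fun u hu => ?_, hQφ⟩
  obtain ⟨Q', hQ', hQ'φ⟩ := hcluster u hu
  have hQQ' : (Q' : Measure E) = Q := Measure.ext_of_charFun (hQ'φ.trans hQφ.symm)
  obtain rfl : Q' = Q := Subtype.ext hQQ'
  exact hQ'

/-- The law of the rescaled noise sum at time `τ`: the sum of `⌊τ / α⌋` independent copies of
`√α w`, where `w` has law `ω`. -/
def rescaledSumLaw (ω : Measure E) [IsProbabilityMeasure ω] (τ α : ℝ) : ProbabilityMeasure E :=
  haveI : IsProbabilityMeasure (ω.map (√α • ·)) := Measure.isProbabilityMeasure_map (by fun_prop)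
  ⟨sumLaw (ω.map (√α • ·)) ⌊τ / α⌋₊, inferInstance⟩

theorem IsNoise.exists_tendsto_rescaledSumLaw [IsProbabilityMeasure ω] (h : IsNoise ω) {τ : ℝ}
    (hτ : 0 ≤ τ) : ∃ Q : ProbabilityMeasure E,
      Tendsto (rescaledSumLaw ω τ) (𝓝[>] 0) (𝓝 Q) ∧
      ∀ t, charFun (Q : Measure E) t = Complex.exp (τ * (-(∫ x, inner ℝ t x ^ 2 ∂ω : ℝ) / 2)) := by
  have hbound : ∀ᶠ α in 𝓝[>] 0, eLpNorm id 4 (rescaledSumLaw ω τ α : Measure E)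
      ≤ ENNReal.ofReal (2 * √τ) * eLpNorm id 4 ω := by
    filter_upwards [self_mem_nhdsWithin] with α hα
    exact h.eLpNorm_sumLaw_map_smul_le (le_of_lt hα) (natFloor_div_mul_le hα hτ)
  obtain ⟨Q, hQ, hQφ⟩ := exists_tendsto_of_tendsto_charFun (by norm_num) (by norm_num)
    (ENNReal.mul_ne_top ENNReal.ofReal_ne_top h.memLp.eLpNorm_ne_top) hbound fun t => by
      have : ∀ α, charFun (rescaledSumLaw ω τ α : Measure E) t
          = charFun ω (√α • t) ^ ⌊τ / α⌋₊ := fun α => by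
        have : IsProbabilityMeasure (ω.map (√α • ·)) :=
          Measure.isProbabilityMeasure_map (by fun_prop)
        exact (charFun_sumLaw _ _ t).trans (by rw [charFun_map_smul])
      simpa only [this] using
        tendsto_pow_natFloor_div (h.tendsto_charFun_sub_one_div t) hτ
  exact ⟨Q, hQ, fun t => congrFun hQφ t⟩

end CentralLimit

section Euler

/-- One Euler step of length `τ` for the drift `y ↦ G y - y`, from `p.1` with noise increment
`p.2`. -/
def eulerStep {E : Type*} [AddCommGroup E] [Module ℝ E] (G : E → E) (τ : ℝ) (p : E × E) : E :=
  p.1 + τ • (G p.1 - p.1) + p.2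

/-- The law after one Euler step from an initial law `ρ` with an independent noise increment of
law `σ`. -/
def eulerLaw {E : Type*} [AddCommGroup E] [Module ℝ E] [MeasurableSpace E] (G : E → E) (τ : ℝ)
    (ρ σ : Measure E) : Measure E :=
  (ρ.prod σ).map (eulerStep G τ)

lemma IsNormLike.eulerStep_sub_le {E : Type*} [AddCommGroup E] [Module ℝ E] {c : E → ℝ}
    (hc : IsNormLike c) {G : E → E} {γ τ : ℝ} (hG : ∀ x y, c (G x - G y) ≤ γ * c (x - y))
    (h0 : 0 ≤ τ) (h1 : τ ≤ 1) (p q : E × E) :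
    c (eulerStep G τ p - eulerStep G τ q)
      ≤ (1 - (1 - γ) * τ) * c (p.1 - q.1) + c (p.2 - q.2) := by
  have hsplit : eulerStep G τ p - eulerStep G τ q
      = ((1 - τ) • (p.1 - q.1) + τ • (G p.1 - G q.1)) + (p.2 - q.2) := by
    simp only [eulerStep]; module
  rw [hsplit]
  calc _ ≤ c ((1 - τ) • (p.1 - q.1)) + c (τ • (G p.1 - G q.1)) + c (p.2 - q.2) :=
        (hc.add_le _ _).trans (by gcongr; exact hc.add_le _ _)
    _ = (1 - τ) * c (p.1 - q.1) + τ * c (G p.1 - G q.1) + c (p.2 - q.2) := by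
        rw [hc.smul_of_nonneg (sub_nonneg.2 h1), hc.smul_of_nonneg h0]
    _ ≤ (1 - τ) * c (p.1 - q.1) + τ * (γ * c (p.1 - q.1)) + c (p.2 - q.2) := by
        gcongr; exact hG _ _
    _ = _ := by ring

lemma IsNormLike.eulerStep_sub_eulerStep_zero_le {E : Type*} [AddCommGroup E] [Module ℝ E]
    {c : E → ℝ} (hc : IsNormLike c) {G : E → E} {γ τ : ℝ}
    (hG : ∀ x y, c (G x - G y) ≤ γ * c (x - y)) (hG0 : G 0 = 0) (h0 : 0 ≤ τ) (h1 : τ ≤ 1)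
    (z l w : E) :
    c (eulerStep G τ (z, w) - eulerStep 0 τ (l, w))
      ≤ (1 - (1 - γ) * τ) * c (z - l) + τ * γ * c l := by
  have hGl : c (G l) ≤ γ * c l := by simpa [hG0] using hG l 0
  calc _ ≤ c (eulerStep G τ (z, w) - eulerStep G τ (l, w))
          + c (eulerStep G τ (l, w) - eulerStep 0 τ (l, w)) := hc.sub_le_sub_add_sub _ _ _
    _ ≤ (1 - (1 - γ) * τ) * c (z - l) + c (τ • G l) := by
        gcongr
        · simpa [hc.map_zero] using hc.eulerStep_sub_le hG h0 h1 (z, w) (l, w)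
        · refine le_of_eq (congrArg c ?_)
          simp only [eulerStep, Pi.zero_apply]; module
    _ ≤ _ := by
        rw [hc.smul_of_nonneg h0, mul_assoc]; gcongr

lemma continuous_eulerStep {E : Type*} [NormedAddCommGroup E] [NormedSpace ℝ E] {G : E → E}
    (hG : Continuous G) (τ : ℝ) : Continuous (eulerStep G τ) := by
  unfold eulerStep
  fun_prop

variable {E : Type*} [NormedAddCommGroup E] [NormedSpace ℝ E] [FiniteDimensional ℝ E]
  [MeasurableSpace E] [BorelSpace E] {c : E → ℝ} {G : E → E} {γ τ : ℝ}

lemma isProbabilityMeasure_eulerLaw (hG : Continuous G) (τ : ℝ) (ρ σ : Measure E)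
    [IsProbabilityMeasure ρ] [IsProbabilityMeasure σ] : IsProbabilityMeasure (eulerLaw G τ ρ σ) :=
  Measure.isProbabilityMeasure_map (continuous_eulerStep hG τ).aemeasurable

lemma wasserstein_eulerLaw_le (hc : IsNormLike c) (hγ : 0 ≤ γ)
    (hG : ∀ x y, c (G x - G y) ≤ γ * c (x - y)) (h0 : 0 ≤ τ) (h1 : τ ≤ 1)
    (ρ ρ' σ σ' : Measure E) [IsProbabilityMeasure ρ] [IsProbabilityMeasure ρ']
    [IsProbabilityMeasure σ] :
    wasserstein c (eulerLaw G τ ρ σ) (eulerLaw G τ ρ' σ')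
      ≤ .ofReal (1 - (1 - γ) * τ) * wasserstein c ρ ρ' + wasserstein c σ σ' := by
  have hq : 0 ≤ 1 - (1 - γ) * τ := by nlinarith
  have hstep := (continuous_eulerStep (hc.continuous_of_le_mul hG) τ).measurable
  have hcm := hc.measurable_fst_sub_snd
  have : Nonempty {π // IsCoupling π ρ ρ'} := ⟨_, .prod ρ ρ'⟩
  change _ ≤ _ * (⨅ π, ⨅ _ : IsCoupling π ρ ρ', _) + ⨅ η, ⨅ _ : IsCoupling η σ σ', _
  rw [iInf_subtype', ENNReal.mul_iInf (by simp)]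
  simp only [ENNReal.iInf_add, ENNReal.add_iInf]
  refine le_iInf₂ fun η hη => le_iInf fun ⟨π, hπ⟩ => ?_
  have := hπ.isProbabilityMeasure
  have := hη.isProbabilityMeasure
  have hlaw₁ : (π.prod η).map (fun p => eulerStep G τ (p.1.1, p.2.1)) = eulerLaw G τ ρ σ := by
    rw [eulerLaw, ← hπ.1, ← hη.1, Measure.map_prod_map _ _ measurable_fst measurable_fst,
      Measure.map_map hstep (by fun_prop)]
    rfl
  have hlaw₂ : (π.prod η).map (fun p => eulerStep G τ (p.1.2, p.2.2)) = eulerLaw G τ ρ' σ' := by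
    rw [eulerLaw, ← hπ.2, ← hη.2, Measure.map_prod_map _ _ measurable_snd measurable_snd,
      Measure.map_map hstep (by fun_prop)]
    rfl
  rw [← hlaw₁, ← hlaw₂]
  refine (wasserstein_map_le hc _ (by fun_prop) (by fun_prop)).trans ?_
  have hsplit := eLpNorm_le_mul_add_mul (P := π.prod η) one_le_two
    (hcm.comp measurable_fst).aestronglyMeasurable (hcm.comp measurable_snd).aestronglyMeasurable
    hq zero_le_one (ae_of_all _ fun p => (abs_of_nonneg (hc.nonneg _)).trans_le <|
      (hc.eulerStep_sub_le hG h0 h1 (p.1.1, p.2.1) (p.1.2, p.2.2)).trans_eq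
        (by rw [one_mul]; rfl))
  rwa [eLpNorm_comp_measurePreserving hcm.aestronglyMeasurable measurePreserving_fst,
    eLpNorm_comp_measurePreserving hcm.aestronglyMeasurable measurePreserving_snd,
    ENNReal.ofReal_one, one_mul] at hsplit

/-- One step of the synchronous coupling of the Euler chains with drifts `y ↦ G y - y` (first
component) and `y ↦ -y` (second component): both receive the same noise increment. -/
def synchronousStep {E : Type*} [AddCommGroup E] [Module ℝ E] (G : E → E) (τ : ℝ)
    (q : (E × E) × E) : E × E :=
  (eulerStep G τ (q.1.1, q.2), eulerStep 0 τ (q.1.2, q.2))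

lemma measurable_synchronousStep (hG : Continuous G) (τ : ℝ) :
    Measurable (synchronousStep G τ) := by
  have hG' := (continuous_eulerStep hG τ).measurable
  have h0' := (continuous_eulerStep (continuous_zero (X := E) (M := E)) τ).measurable
  unfold synchronousStep
  fun_prop

variable {ω : Measure E} [IsProbabilityMeasure ω] {p B : ℝ≥0∞}

lemma ofReal_mul_eLpNorm_sub_chainLaw_synchronousStep_le (hc : IsNormLike c) (hγ0 : 0 ≤ γ)
    (hγ1 : γ ≤ 1) (hG : ∀ x y, c (G x - G y) ≤ γ * c (x - y)) (hG0 : G 0 = 0) (h0 : 0 ≤ τ)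
    (h1 : τ ≤ 1) (hp : 1 ≤ p)
    (hB : ∀ k, eLpNorm (fun q => c q.2) p (chainLaw (synchronousStep G τ) ω (.dirac 0) k) ≤ B)
    (k : ℕ) : .ofReal (1 - γ) * eLpNorm (fun q => c (q.1 - q.2)) p
      (chainLaw (synchronousStep G τ) ω (.dirac 0) k) ≤ .ofReal γ * B := by
  have hcm := hc.measurable_fst_sub_snd
  have hc2 : Measurable fun q : E × E => c q.2 := hc.measurable.comp measurable_snd
  have hf := measurable_synchronousStep (hc.continuous_of_le_mul hG) τ
  have hq : 0 ≤ 1 - (1 - γ) * τ := by nlinarith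
  induction k with
  | zero => simp [chainLaw, eLpNorm_dirac _ _ (zero_lt_one.trans_le hp).ne', hc.map_zero]
  | succ k ih =>
    have := isProbabilityMeasure_chainLaw (ω := ω) (P := .dirac 0) hf k
    set J := chainLaw (synchronousStep G τ) ω (.dirac 0) k
    have hstep : eLpNorm (fun q => c (q.1 - q.2)) p
          (chainLaw (synchronousStep G τ) ω (.dirac 0) (k + 1))
        ≤ .ofReal (1 - (1 - γ) * τ) * eLpNorm (fun q => c (q.1 - q.2)) p J
          + .ofReal (τ * γ) * eLpNorm (fun q => c q.2) p J := by
      rw [chainLaw, eLpNorm_map_measure hcm.aestronglyMeasurable hf.aemeasurable,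
        ← eLpNorm_comp_measurePreserving hcm.aestronglyMeasurable
          (measurePreserving_fst (μ := J) (ν := ω)),
        ← eLpNorm_comp_measurePreserving hc2.aestronglyMeasurable
          (measurePreserving_fst (μ := J) (ν := ω))]
      exact eLpNorm_le_mul_add_mul hp (hcm.comp measurable_fst).aestronglyMeasurable
        (hc2.comp measurable_fst).aestronglyMeasurable hq (mul_nonneg h0 hγ0)
        (ae_of_all _ fun q => (abs_of_nonneg (hc.nonneg _)).trans_le
          (hc.eulerStep_sub_eulerStep_zero_le hG hG0 h0 h1 q.1.1 q.1.2 q.2))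
    calc _ ≤ .ofReal (1 - γ) * (.ofReal (1 - (1 - γ) * τ)
            * eLpNorm (fun q => c (q.1 - q.2)) p J + .ofReal (τ * γ) * B) := by
          gcongr
          exact hstep.trans (by gcongr; exact hB k)
      _ ≤ .ofReal (1 - (1 - γ) * τ) * (.ofReal γ * B) + .ofReal ((1 - γ) * (τ * γ)) * B := by
          rw [mul_add, mul_left_comm, ENNReal.ofReal_mul (sub_nonneg.2 hγ1), mul_assoc]
          gcongr
      _ = .ofReal γ * B := by
          rw [← mul_assoc, ← ENNReal.ofReal_mul hq, ← add_mul,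
            ← ENNReal.ofReal_add (mul_nonneg hq hγ0)
              (mul_nonneg (sub_nonneg.2 hγ1) (mul_nonneg h0 hγ0))]
          congr 2; ring

lemma ofReal_mul_eLpNorm_chainLaw_eulerStep_le (hc : IsNormLike c) (hγ0 : 0 ≤ γ) (hγ1 : γ ≤ 1)
    (hG : ∀ x y, c (G x - G y) ≤ γ * c (x - y)) (hG0 : G 0 = 0) (h0 : 0 ≤ τ) (h1 : τ ≤ 1)
    (hp : 1 ≤ p) (hB : ∀ k, eLpNorm c p (chainLaw (eulerStep 0 τ) ω (.dirac 0) k) ≤ B) (k : ℕ) :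
    .ofReal (1 - γ) * eLpNorm c p (chainLaw (eulerStep G τ) ω (.dirac 0) k) ≤ B := by
  let J := chainLaw (synchronousStep G τ) ω (.dirac 0)
  have hf := measurable_synchronousStep (hc.continuous_of_le_mul hG) τ
  have hG' := (continuous_eulerStep (hc.continuous_of_le_mul hG) τ).measurable
  have h0' := (continuous_eulerStep (continuous_zero (X := E) (M := E)) τ).measurable
  have hfst : (J k).map Prod.fst = chainLaw (eulerStep G τ) ω (.dirac 0) k := by
    simpa [Measure.map_dirac] using
      map_chainLaw (P := .dirac 0) hf hG' measurable_fst (fun _ _ => rfl) k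
  have hl : ∀ k, eLpNorm (fun q => c q.2) p (J k) ≤ B := fun k => by
    have hsnd : (J k).map Prod.snd = chainLaw (eulerStep 0 τ) ω (.dirac 0) k := by
      simpa [Measure.map_dirac] using
        map_chainLaw (P := .dirac 0) hf h0' measurable_snd (fun _ _ => rfl) k
    refine le_trans (le_of_eq ?_) (hB k)
    rw [← hsnd, eLpNorm_map_measure hc.measurable.aestronglyMeasurable (by fun_prop)]
    rfl
  rw [← hfst, eLpNorm_map_measure hc.measurable.aestronglyMeasurable (by fun_prop)]
  calc _ ≤ .ofReal (1 - γ) * (eLpNorm (fun q => c (q.1 - q.2)) p (J k)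
          + eLpNorm (fun q => c q.2) p (J k)) := by
        gcongr
        refine eLpNorm_le_add hp hc.measurable_fst_sub_snd.aestronglyMeasurable
          (hc.measurable.comp measurable_snd).aestronglyMeasurable (ae_of_all _ fun q => ?_)
        simpa [abs_of_nonneg (hc.nonneg _)] using hc.add_le (q.1 - q.2) q.2
    _ ≤ .ofReal γ * B + .ofReal (1 - γ) * B := by
        rw [mul_add]
        exact add_le_add (ofReal_mul_eLpNorm_sub_chainLaw_synchronousStep_le hc hγ0 hγ1 hG hG0 h0
          h1 hp hl k) (by gcongr; exact hl k)
    _ = B := by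
        rw [← add_mul, ← ENNReal.ofReal_add hγ0 (sub_nonneg.2 hγ1)]; simp

lemma wasserstein_chainLaw_eulerStep_le (hc : IsNormLike c) (hγ : 0 ≤ γ)
    (hG : ∀ x y, c (G x - G y) ≤ γ * c (x - y)) (h0 : 0 ≤ τ) (h1 : τ ≤ 1)
    (P Q : Measure E) [IsProbabilityMeasure P] [IsProbabilityMeasure Q] (k : ℕ) :
    wasserstein c (chainLaw (eulerStep G τ) ω P k) (chainLaw (eulerStep G τ) ω Q k)
      ≤ .ofReal (1 - (1 - γ) * τ) ^ k * wasserstein c P Q := by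
  have hG' := (continuous_eulerStep (hc.continuous_of_le_mul hG) τ).measurable
  induction k with
  | zero => simp [chainLaw]
  | succ k ih =>
    have := isProbabilityMeasure_chainLaw (ω := ω) (P := P) hG' k
    have := isProbabilityMeasure_chainLaw (ω := ω) (P := Q) hG' k
    refine (wasserstein_eulerLaw_le hc hγ hG h0 h1 _ _ ω ω).trans ?_
    rw [wasserstein_self hc, add_zero, pow_succ', mul_assoc]
    gcongr

-- The chain started at `0` converges to `ρ`, so its moment bound passes to `ρ`.
lemma eLpNorm_le_of_eulerLaw_eq (hc : IsNormLike c) (hγ0 : 0 ≤ γ) (hγ1 : γ < 1)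
    (hG : ∀ x y, c (G x - G y) ≤ γ * c (x - y)) (hG0 : G 0 = 0) (h0 : 0 < τ) (h1 : τ ≤ 1)
    (hp : 1 ≤ p) (hp' : p ≠ ∞)
    (hB : ∀ k, eLpNorm c p (chainLaw (eulerStep 0 τ) ω (.dirac 0) k) ≤ B)
    {ρ : Measure E} [IsProbabilityMeasure ρ] (hρ : eLpNorm c 2 ρ ≠ ∞)
    (hstat : eulerLaw G τ ρ ω = ρ) : eLpNorm c p ρ ≤ B / .ofReal (1 - γ) := by
  have hG' := (continuous_eulerStep (hc.continuous_of_le_mul hG) τ).measurable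
  have hγ : ENNReal.ofReal (1 - γ) ≠ 0 := by simpa using hγ1
  have hfin : wasserstein c (.dirac 0) ρ ≠ ∞ := by
    refine ((wasserstein_le_add hc _ _).trans_lt ?_).ne
    simpa [eLpNorm_dirac, hc.map_zero] using hρ.lt_top
  let Z : ℕ → ProbabilityMeasure E := fun k =>
    ⟨chainLaw (eulerStep G τ) ω (.dirac 0) k, isProbabilityMeasure_chainLaw hG' k⟩
  have hlim : Tendsto (fun k => wasserstein c (Z k : Measure E) ρ) atTop (𝓝 0) := by
    have hq : ENNReal.ofReal (1 - (1 - γ) * τ) < 1 := by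
      rw [ENNReal.ofReal_lt_one]; nlinarith [mul_pos (sub_pos.2 hγ1) h0]
    have hpow := ENNReal.Tendsto.mul_const (ENNReal.tendsto_pow_atTop_nhds_zero_iff.2 hq)
      (.inr hfin)
    rw [zero_mul] at hpow
    refine tendsto_of_tendsto_of_tendsto_of_le_of_le tendsto_const_nhds hpow
      (fun _ => zero_le) fun k => ?_
    have := wasserstein_chainLaw_eulerStep_le (ω := ω) hc hγ0 hG h0.le h1 (.dirac 0) ρ k
    rwa [chainLaw_of_stationary hstat] at this
  refine eLpNorm_le_of_tendsto (tendsto_of_tendsto_wasserstein (Q := ⟨ρ, ‹_›⟩) hc hlim)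
    hc.continuous (zero_lt_one.trans_le hp).ne' hp' (.of_forall fun k => ?_)
  rw [ENNReal.le_div_iff_mul_le (.inl hγ) (.inl ENNReal.ofReal_ne_top), mul_comm]
  exact ofReal_mul_eLpNorm_chainLaw_eulerStep_le hc hγ0 hγ1.le hG hG0 h0.le h1 hp hB k

end Euler

section Path

lemma eulerStep_sub_eulerStep_succ {E : Type*} [AddCommGroup E] [Module ℝ E] (U H : E → E) (α : ℝ)
    (k : ℕ) (y₀ y s w : E) :
    eulerStep U α (y, w) - eulerStep H ((k + 1 : ℕ) * α) (y₀, s + w)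
      = (y - eulerStep H (k * α) (y₀, s)) + α • ((U y - y) - (H y₀ - y₀)) := by
  simp only [eulerStep, Nat.cast_succ]; module

variable {E : Type*} [NormedAddCommGroup E] [NormedSpace ℝ E] [FiniteDimensional ℝ E]
  [MeasurableSpace E] [BorelSpace E] {c : E → ℝ} {U G : E → E} {γ α : ℝ} {ω ρ : Measure E}

/-- One step of the Euler chain with drift `y ↦ U y - y` that also records the initial state and
the accumulated noise: the state is `(y₀, y, s)`. -/
def pathStep (U : E → E) (α : ℝ) (q : (E × E × E) × E) : E × E × E :=
  (q.1.1, eulerStep U α (q.1.2.1, q.2), q.1.2.2 + q.2)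

/-- The joint law of the initial state `y₀`, the state `y_k` and the accumulated noise `s_k` of the
Euler chain with drift `y ↦ U y - y` started from `ρ`. -/
def pathLaw (U : E → E) (α : ℝ) (ω ρ : Measure E) : ℕ → Measure (E × E × E) :=
  chainLaw (pathStep U α) ω (ρ.map fun y => (y, y, 0))

variable [IsProbabilityMeasure ω] [IsProbabilityMeasure ρ]

lemma measurable_pathStep (hU : Continuous U) (α : ℝ) : Measurable (pathStep U α) := by
  have := (continuous_eulerStep hU α).measurable
  unfold pathStep; fun_prop

lemma isProbabilityMeasure_pathLaw (hU : Continuous U) (k : ℕ) :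
    IsProbabilityMeasure (pathLaw U α ω ρ k) :=
  have : IsProbabilityMeasure (ρ.map fun y => (y, y, (0 : E))) :=
    Measure.isProbabilityMeasure_map (by fun_prop)
  isProbabilityMeasure_chainLaw (measurable_pathStep hU α) k

lemma map_pathLaw_state (hU : Continuous U) (hstat : eulerLaw U α ρ ω = ρ) (k : ℕ) :
    (pathLaw U α ω ρ k).map (fun q => q.2.1) = ρ := by
  have : IsProbabilityMeasure (ρ.map fun y => (y, y, (0 : E))) :=
    Measure.isProbabilityMeasure_map (by fun_prop)
  rw [pathLaw, map_chainLaw (measurable_pathStep hU α) (continuous_eulerStep hU α).measurable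
    (by fun_prop) fun _ _ => rfl, Measure.map_map (by fun_prop) (by fun_prop)]
  exact (congrArg (chainLaw _ ω · k) Measure.map_id).trans (chainLaw_of_stationary hstat k)

lemma map_pathLaw_initial_noise (hU : Continuous U) (k : ℕ) :
    (pathLaw U α ω ρ k).map (fun q => (q.1, q.2.2)) = ρ.prod (sumLaw ω k) := by
  have : IsProbabilityMeasure (ρ.map fun y => (y, y, (0 : E))) :=
    Measure.isProbabilityMeasure_map (by fun_prop)
  rw [pathLaw, map_chainLaw (f' := fun q : (E × E) × E => (q.1.1, q.1.2 + q.2))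
    (measurable_pathStep hU α) (by fun_prop) (by fun_prop) fun _ _ => rfl,
    Measure.map_map (by fun_prop) (by fun_prop), sumLaw,
    ← chainLaw_prod (f := fun q : E × E => q.1 + q.2) (by fun_prop), Measure.prod_dirac]
  rfl

lemma eLpNorm_sub_eulerStep_pathLaw_le (hc : IsNormLike c) (hU : Continuous U) {H : E → E}
    (hH : Continuous H) (hα : 0 ≤ α) {B : ℝ≥0∞} {n : ℕ}
    (hB : ∀ k < n, eLpNorm (fun q => c ((U q.2.1 - q.2.1) - (H q.1 - q.1))) 2
      (pathLaw U α ω ρ k) ≤ B) :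
    eLpNorm (fun q => c (q.2.1 - eulerStep H (n * α) (q.1, q.2.2))) 2 (pathLaw U α ω ρ n)
      ≤ .ofReal (n * α) * B := by
  have hcm := hc.measurable
  have hU' := hU.measurable
  have hH' := hH.measurable
  have hR : ∀ k : ℕ, Measurable fun q : E × E × E =>
      c (q.2.1 - eulerStep H (k * α) (q.1, q.2.2)) := fun k => by
    have := (continuous_eulerStep hH (k * α)).measurable
    fun_prop
  have hD : Measurable fun q : E × E × E => c ((U q.2.1 - q.2.1) - (H q.1 - q.1)) := by fun_prop
  induction n with
  | zero =>
    simp only [pathLaw, chainLaw]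
    rw [eLpNorm_map_measure (hR 0).aestronglyMeasurable (by fun_prop)]
    simp [Function.comp_def, eulerStep, hc.map_zero]
  | succ k ih =>
    have := isProbabilityMeasure_pathLaw (ω := ω) (ρ := ρ) (α := α) hU k
    have hfst := measurePreserving_fst (μ := pathLaw U α ω ρ k) (ν := ω)
    have hstep := eLpNorm_le_mul_add_mul (P := (pathLaw U α ω ρ k).prod ω)
      (f := (fun q => c (q.2.1 - eulerStep H ((k + 1 : ℕ) * α) (q.1, q.2.2))) ∘ pathStep U α)
      one_le_two ((hR k).comp measurable_fst).aestronglyMeasurable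
      (hD.comp measurable_fst).aestronglyMeasurable zero_le_one hα <| ae_of_all _ fun q => by
        simp only [Function.comp_apply, pathStep, abs_of_nonneg (hc.nonneg _), one_mul,
          eulerStep_sub_eulerStep_succ, ← hc.smul_of_nonneg hα]
        exact hc.add_le _ _
    rw [eLpNorm_comp_measurePreserving (hR k).aestronglyMeasurable hfst,
      eLpNorm_comp_measurePreserving hD.aestronglyMeasurable hfst, ENNReal.ofReal_one,
      one_mul] at hstep
    rw [pathLaw, chainLaw, eLpNorm_map_measure (hR _).aestronglyMeasurable
      (measurable_pathStep hU α).aemeasurable]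
    calc _ ≤ _ := hstep
      _ ≤ .ofReal (k * α) * B + .ofReal α * B := by
        gcongr
        exacts [ih fun j hj => hB j (by omega), hB k (by omega)]
      _ = .ofReal ((k + 1 : ℕ) * α) * B := by
        rw [← add_mul, ← ENNReal.ofReal_add (by positivity) hα]; push_cast; ring_nf

lemma eLpNorm_comp_state_pathLaw (hU : Continuous U) (hstat : eulerLaw U α ρ ω = ρ) {f : E → ℝ}
    (hf : Measurable f) (p : ℝ≥0∞) (k : ℕ) :
    eLpNorm (fun q => f q.2.1) p (pathLaw U α ω ρ k) = eLpNorm f p ρ := by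
  conv_rhs => rw [← map_pathLaw_state hU hstat k]
  exact (eLpNorm_map_measure hf.aestronglyMeasurable (by fun_prop)).symm

lemma eLpNorm_comp_noise_pathLaw (hU : Continuous U) {f : E → ℝ} (hf : Measurable f) (p : ℝ≥0∞)
    (k : ℕ) : eLpNorm (fun q => f q.2.2) p (pathLaw U α ω ρ k) = eLpNorm f p (sumLaw ω k) := by
  rw [← eLpNorm_comp_measurePreserving hf.aestronglyMeasurable
    (measurePreserving_snd (μ := ρ) (ν := sumLaw ω k)), ← map_pathLaw_initial_noise hU,
    eLpNorm_map_measure (hf.comp measurable_snd).aestronglyMeasurable (by fun_prop)]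
  rfl

lemma eLpNorm_sub_self_le_two_mul (hc : IsNormLike c) (hγ : γ ≤ 1)
    (hG : ∀ x y, c (G x - G y) ≤ γ * c (x - y)) (hG0 : G 0 = 0) {p : ℝ≥0∞} (hp : 1 ≤ p)
    (ρ : Measure E) : eLpNorm (fun y => c (G y - y)) p ρ ≤ 2 * eLpNorm c p ρ := by
  have hle : ∀ y, |c (G y - y)| ≤ c y + c y := fun y => by
    have hGy : c (G y) ≤ γ * c y := by simpa [hG0] using hG y 0
    rw [abs_of_nonneg (hc.nonneg _)]
    exact (hc.sub_le _ _).trans (by nlinarith [hc.nonneg y])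
  rw [two_mul]
  exact eLpNorm_le_add hp hc.measurable.aestronglyMeasurable hc.measurable.aestronglyMeasurable
    (ae_of_all _ hle)

lemma eLpNorm_sub_initial_pathLaw_le (hc : IsNormLike c) (hγ : γ ≤ 1)
    (hU : ∀ x y, c (U x - U y) ≤ γ * c (x - y)) (hU0 : U 0 = 0) (hα : 0 ≤ α)
    (hstat : eulerLaw U α ρ ω = ρ) (n : ℕ) :
    eLpNorm (fun q => c (q.2.1 - q.1)) 2 (pathLaw U α ω ρ n)
      ≤ .ofReal (n * α) * (2 * eLpNorm c 2 ρ) + eLpNorm c 2 (sumLaw ω n) := by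
  have hU' := hc.continuous_of_le_mul hU
  have hUm := hU'.measurable
  have hcm := hc.measurable
  have hdrift : ∀ k < n, eLpNorm (fun q => c ((U q.2.1 - q.2.1) - (id q.1 - q.1))) 2
      (pathLaw U α ω ρ k) ≤ 2 * eLpNorm c 2 ρ := fun k _ => by
    simp only [id, sub_self, sub_zero]
    rw [eLpNorm_comp_state_pathLaw hU' hstat (f := fun y => c (U y - y)) (by fun_prop)]
    exact eLpNorm_sub_self_le_two_mul hc hγ hU hU0 one_le_two ρ
  have hle : ∀ q : E × E × E, |c (q.2.1 - q.1)|
      ≤ c (q.2.1 - eulerStep id (n * α) (q.1, q.2.2)) + c q.2.2 := fun q => by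
    rw [abs_of_nonneg (hc.nonneg _)]
    refine le_trans (le_of_eq (congrArg c ?_)) (hc.add_le _ _)
    simp only [eulerStep, id]; module
  have herr : Measurable fun q : E × E × E =>
      c (q.2.1 - eulerStep id (n * α) (q.1, q.2.2)) := by
    have := (continuous_eulerStep (continuous_id (X := E)) (n * α)).measurable
    fun_prop
  have hnoise : Measurable fun q : E × E × E => c q.2.2 := by fun_prop
  calc _ ≤ _ := eLpNorm_le_add one_le_two herr.aestronglyMeasurable hnoise.aestronglyMeasurable
        (ae_of_all _ hle)
    _ ≤ _ := by
      rw [eLpNorm_comp_noise_pathLaw hU' hcm]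
      gcongr
      exact eLpNorm_sub_eulerStep_pathLaw_le hc hU' continuous_id hα hdrift

lemma eLpNorm_drift_sub_pathLaw_le (hc : IsNormLike c) (hγ : γ ≤ 1)
    (hU : ∀ x y, c (U x - U y) ≤ γ * c (x - y)) (hU0 : U 0 = 0)
    (hG : ∀ x y, c (G x - G y) ≤ γ * c (x - y)) (hα : 0 ≤ α) (hstat : eulerLaw U α ρ ω = ρ)
    (k : ℕ) :
    eLpNorm (fun q => c ((U q.2.1 - q.2.1) - (G q.1 - q.1))) 2 (pathLaw U α ω ρ k)
      ≤ eLpNorm (fun y => c (U y - G y)) 2 ρ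
        + 2 * (.ofReal (k * α) * (2 * eLpNorm c 2 ρ) + eLpNorm c 2 (sumLaw ω k)) := by
  have hU' := hc.continuous_of_le_mul hU
  have hUm := hU'.measurable
  have hGm := (hc.continuous_of_le_mul hG).measurable
  have hcm := hc.measurable
  have hle : ∀ q : E × E × E, |c ((U q.2.1 - q.2.1) - (G q.1 - q.1))|
      ≤ 1 * c (U q.2.1 - G q.2.1) + 2 * c (q.2.1 - q.1) := fun q => by
    have h := hG q.2.1 q.1
    have hsplit : (U q.2.1 - q.2.1) - (G q.1 - q.1)
        = (U q.2.1 - G q.2.1) + (G q.2.1 - G q.1) - (q.2.1 - q.1) := by abel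
    rw [abs_of_nonneg (hc.nonneg _), hsplit]
    nlinarith [hc.sub_le ((U q.2.1 - G q.2.1) + (G q.2.1 - G q.1)) (q.2.1 - q.1),
      hc.add_le (U q.2.1 - G q.2.1) (G q.2.1 - G q.1), hc.nonneg (q.2.1 - q.1)]
  have hdiff : Measurable fun y => c (U y - G y) := by fun_prop
  have hdiff' : Measurable fun q : E × E × E => c (U q.2.1 - G q.2.1) := by fun_prop
  have hdisp : Measurable fun q : E × E × E => c (q.2.1 - q.1) := by fun_prop
  refine (eLpNorm_le_mul_add_mul one_le_two hdiff'.aestronglyMeasurable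
    hdisp.aestronglyMeasurable zero_le_one zero_le_two (ae_of_all _ hle)).trans ?_
  rw [eLpNorm_comp_state_pathLaw hU' hstat hdiff, ENNReal.ofReal_one, one_mul,
    ENNReal.ofReal_ofNat]
  gcongr
  exact eLpNorm_sub_initial_pathLaw_le hc hγ hU hU0 hα hstat k

theorem wasserstein_eulerLaw_sumLaw_le (hc : IsNormLike c) (hγ : γ ≤ 1)
    (hU : ∀ x y, c (U x - U y) ≤ γ * c (x - y)) (hU0 : U 0 = 0)
    (hG : ∀ x y, c (G x - G y) ≤ γ * c (x - y)) (hα : 0 ≤ α) (hstat : eulerLaw U α ρ ω = ρ)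
    {n : ℕ} {S : ℝ≥0∞} (hS : ∀ k ≤ n, eLpNorm c 2 (sumLaw ω k) ≤ S) :
    wasserstein c ρ (eulerLaw G (n * α) ρ (sumLaw ω n))
      ≤ .ofReal (n * α) * (eLpNorm (fun y => c (U y - G y)) 2 ρ
        + 2 * (.ofReal (n * α) * (2 * eLpNorm c 2 ρ) + S)) := by
  have hU' := hc.continuous_of_le_mul hU
  have hG' := hc.continuous_of_le_mul hG
  have hstepm := (continuous_eulerStep hG' (n * α)).measurable
  have hlaw : (pathLaw U α ω ρ n).map (fun q => eulerStep G (n * α) (q.1, q.2.2))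
      = eulerLaw G (n * α) ρ (sumLaw ω n) := by
    rw [eulerLaw, ← map_pathLaw_initial_noise hU', Measure.map_map hstepm (by fun_prop)]
    rfl
  have hcoupling := wasserstein_map_le hc (pathLaw U α ω ρ n) (f := fun q => q.2.1)
    (g := fun q => eulerStep G (n * α) (q.1, q.2.2)) (by fun_prop) (by fun_prop)
  rw [map_pathLaw_state hU' hstat, hlaw] at hcoupling
  refine hcoupling.trans (eLpNorm_sub_eulerStep_pathLaw_le hc hU' hG' hα fun k hk => ?_)
  refine (eLpNorm_drift_sub_pathLaw_le hc hγ hU hU0 hG hα hstat k).trans ?_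
  gcongr
  exact hS k hk.le

lemma wasserstein_eulerLaw_eulerLaw_le (hc : IsNormLike c) (hγ : γ ≤ 1)
    (hG : ∀ x y, c (G x - G y) ≤ γ * c (x - y)) (hG0 : G 0 = 0) (a b : ℝ) (ρ σ : Measure E)
    [IsProbabilityMeasure σ] :
    wasserstein c (eulerLaw G a ρ σ) (eulerLaw G b ρ σ)
      ≤ .ofReal |a - b| * (2 * eLpNorm c 2 ρ) := by
  have hG' := hc.continuous_of_le_mul hG
  have hGm := hG'.measurable
  have hcm := hc.measurable
  have hdiff : ∀ p : E × E, c (eulerStep G a p - eulerStep G b p)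
      = |a - b| * c (G p.1 - p.1) := fun p => by
    rw [← hc.smul_eq]
    congr 1
    simp only [eulerStep]; module
  have hself : Measurable fun y => c (G y - y) := by fun_prop
  refine (wasserstein_map_le hc _ (continuous_eulerStep hG' a).measurable
    (continuous_eulerStep hG' b).measurable).trans ?_
  simp only [hdiff]
  change eLpNorm (|a - b| • ((fun y => c (G y - y)) ∘ Prod.fst)) 2 (ρ.prod σ) ≤ _
  rw [eLpNorm_const_smul, eLpNorm_comp_measurePreserving hself.aestronglyMeasurable
    measurePreserving_fst, Real.enorm_of_nonneg (abs_nonneg _)]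
  gcongr
  exact eLpNorm_sub_self_le_two_mul hc hγ hG hG0 one_le_two ρ

end Path

section Rescaling

lemma tendsto_ofReal_mul_nhdsGT_zero {f : ℝ → ℝ} (hf : Continuous f) (h0 : f 0 = 0) {b : ℝ≥0∞}
    (hb : b ≠ ∞) : Tendsto (fun τ => .ofReal (f τ) * b) (𝓝[>] 0) (𝓝 0) := by
  have hcont : Continuous fun τ => ENNReal.ofReal (f τ) := ENNReal.continuous_ofReal.comp hf
  simpa using ENNReal.Tendsto.mul_const
    ((hcont.tendsto' 0 0 (by simp [h0])).mono_left (nhdsWithin_le_nhds (s := Set.Ioi 0))) (.inr hb)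

/-- The operator `T` centred at `θ` and zoomed in by the factor `√α`, the natural scale of the
fluctuations of stochastic approximation with stepsize `α`. -/
def scaledOp {E : Type*} [AddCommGroup E] [Module ℝ E] (T : E → E) (θ : E) (α : ℝ) (y : E) : E :=
  (√α)⁻¹ • (T (θ + √α • y) - θ)

lemma scaledOp_zero {E : Type*} [AddCommGroup E] [Module ℝ E] {T : E → E} {θ : E}
    (hfix : T θ = θ) (α : ℝ) : scaledOp T θ α 0 = 0 := by
  simp [scaledOp, hfix]

lemma IsNormLike.scaledOp_sub_le {E : Type*} [AddCommGroup E] [Module ℝ E] {c : E → ℝ}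
    (hc : IsNormLike c) {T : E → E} {γ : ℝ} (hT : ∀ x y, c (T x - T y) ≤ γ * c (x - y)) (θ : E)
    {α : ℝ} (hα : 0 < α) (x y : E) :
    c (scaledOp T θ α x - scaledOp T θ α y) ≤ γ * c (x - y) := by
  have hs : 0 < √α := Real.sqrt_pos.2 hα
  have hT' := hT (θ + √α • x) (θ + √α • y)
  rw [add_sub_add_left_eq_sub, ← smul_sub, hc.smul_of_nonneg hs.le] at hT'
  rw [scaledOp, scaledOp, ← smul_sub, sub_sub_sub_cancel_right,
    hc.smul_of_nonneg (inv_nonneg.2 hs.le)]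
  calc (√α)⁻¹ * c (T (θ + √α • x) - T (θ + √α • y))
      ≤ (√α)⁻¹ * (γ * (√α * c (x - y))) := by gcongr
    _ = γ * c (x - y) := by field_simp

variable {E : Type*} [NormedAddCommGroup E] [NormedSpace ℝ E] {c : E → ℝ} {T G : E → E} {θ : E}
  {γ : ℝ}

lemma tendsto_scaledOp (hG : ∀ r : ℝ, 0 ≤ r → ∀ x, G (r • x) = r • G x)
    (hTG : (fun h => T (θ + h) - θ - G h) =o[𝓝 0] id) (y : E) :
    Tendsto (scaledOp T θ · y) (𝓝[>] 0) (𝓝 (G y)) := by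
  have hs : Tendsto (fun α : ℝ => √α • y) (𝓝[>] 0) (𝓝 0) :=
    ((by fun_prop : Continuous fun α : ℝ => √α • y).tendsto' 0 0 (by simp)).mono_left
      nhdsWithin_le_nhds
  rw [← tendsto_sub_nhds_zero_iff]
  have hO : (fun α : ℝ => √α • y) =O[𝓝[>] 0] fun α => √α :=
    Asymptotics.IsBigO.of_bound ‖y‖ (Eventually.of_forall fun α => by rw [norm_smul, mul_comm])
  refine ((hTG.comp_tendsto hs).trans_isBigO hO).tendsto_inv_smul_nhds_zero.congr' ?_
  filter_upwards [self_mem_nhdsWithin] with α (hα : 0 < α)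
  simp only [Function.comp_apply, scaledOp, hG _ (Real.sqrt_nonneg α)]
  rw [smul_sub, inv_smul_smul₀ (Real.sqrt_pos.2 hα).ne']

variable [FiniteDimensional ℝ E]

lemma IsNormLike.sub_le_of_isLittleO (hc : IsNormLike c)
    (hT : ∀ x y, c (T x - T y) ≤ γ * c (x - y))
    (hG : ∀ r : ℝ, 0 ≤ r → ∀ x, G (r • x) = r • G x)
    (hTG : (fun h => T (θ + h) - θ - G h) =o[𝓝 0] id) (x y : E) :
    c (G x - G y) ≤ γ * c (x - y) :=
  le_of_tendsto
    ((hc.continuous.tendsto _).comp ((tendsto_scaledOp hG hTG x).sub (tendsto_scaledOp hG hTG y)))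
    (eventually_mem_nhdsWithin.mono fun _ hα => hc.scaledOp_sub_le hT θ hα x y)

lemma IsNormLike.exists_le_mul_add_mul_sq (hc : IsNormLike c) {r : E → E} (hr : r =o[𝓝 0] id)
    {L : ℝ} (hL : 0 ≤ L) (hrL : ∀ h, c (r h) ≤ L * c h) {ε : ℝ} (hε : 0 < ε) :
    ∃ B, 0 ≤ B ∧ ∀ h, c (r h) ≤ ε * c h + B * c h ^ 2 := by
  obtain ⟨C, hC₀, hC⟩ := hc.exists_le_norm
  obtain ⟨M, hM₀, hM⟩ := hc.exists_norm_le
  obtain ⟨δ, hδ, hball⟩ := Metric.eventually_nhds_iff.1 (hr.def (c := ε / (C * M)) (by positivity))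
  refine ⟨L * (M / δ), by positivity, fun h => ?_⟩
  have hh := hc.nonneg h
  rcases lt_or_ge ‖h‖ δ with hlt | hge
  · have hsmall : c (r h) ≤ ε * c h :=
      calc c (r h) ≤ C * ‖r h‖ := hC _
        _ ≤ C * (ε / (C * M) * (M * c h)) := by
          gcongr
          exact (hball (by simpa using hlt)).trans (by gcongr; exact hM h)
        _ = ε * c h := by field_simp
    have : 0 ≤ L * (M / δ) * c h ^ 2 := by positivity
    linarith
  · have hfar : 1 ≤ M / δ * c h := by
      rw [div_mul_eq_mul_div, one_le_div hδ]
      exact hge.trans (hM h)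
    calc c (r h) ≤ L * c h := hrL h
      _ ≤ L * c h * (M / δ * c h) := le_mul_of_one_le_right (by positivity) hfar
      _ = 0 + L * (M / δ) * c h ^ 2 := by ring
      _ ≤ ε * c h + L * (M / δ) * c h ^ 2 := by gcongr; positivity

lemma IsNormLike.exists_scaledOp_sub_le_mul_add (hc : IsNormLike c) (hγ : 0 ≤ γ)
    (hT : ∀ x y, c (T x - T y) ≤ γ * c (x - y)) (hfix : T θ = θ)
    (hG : ∀ r : ℝ, 0 ≤ r → ∀ x, G (r • x) = r • G x)
    (hTG : (fun h => T (θ + h) - θ - G h) =o[𝓝 0] id) {ε : ℝ} (hε : 0 < ε) :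
    ∃ B, 0 ≤ B ∧ ∀ α > 0, ∀ y,
      c (scaledOp T θ α y - G y) ≤ ε * c y + B * √α * c y ^ 2 := by
  have hG0 : G 0 = 0 := by simpa using hG 0 le_rfl 0
  have hrL : ∀ h, c (T (θ + h) - θ - G h) ≤ (γ + γ) * c h := fun h => by
    have hTh := hT (θ + h) θ
    have hGh := hc.sub_le_of_isLittleO hT hG hTG h 0
    rw [hfix, add_sub_cancel_left] at hTh
    rw [hG0, sub_zero, sub_zero] at hGh
    linarith [hc.sub_le (T (θ + h) - θ) (G h)]
  obtain ⟨B, hB, hle⟩ := hc.exists_le_mul_add_mul_sq hTG (add_nonneg hγ hγ) hrL hε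
  refine ⟨B, hB, fun α hα y => ?_⟩
  have hs : 0 < √α := Real.sqrt_pos.2 hα
  have hscale : scaledOp T θ α y - G y
      = (√α)⁻¹ • (T (θ + √α • y) - θ - G (√α • y)) := by
    rw [hG _ hs.le, smul_sub, inv_smul_smul₀ hs.ne', scaledOp]
  rw [hscale, hc.smul_of_nonneg (inv_nonneg.2 hs.le)]
  have h := hle (√α • y)
  rw [hc.smul_of_nonneg hs.le] at h
  calc _ ≤ (√α)⁻¹ * (ε * (√α * c y) + B * (√α * c y) ^ 2) := by gcongr
    _ = ε * c y + B * √α * c y ^ 2 := by field_simp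

variable [MeasurableSpace E] [BorelSpace E]

theorem IsNormLike.tendsto_eLpNorm_scaledOp_sub (hc : IsNormLike c) (hγ : 0 ≤ γ)
    (hT : ∀ x y, c (T x - T y) ≤ γ * c (x - y)) (hfix : T θ = θ)
    (hG : ∀ r : ℝ, 0 ≤ r → ∀ x, G (r • x) = r • G x)
    (hTG : (fun h => T (θ + h) - θ - G h) =o[𝓝 0] id) {P : ℝ → ProbabilityMeasure E} {K : ℝ≥0∞}
    (hK : K ≠ ∞) (hP : ∀ᶠ α in 𝓝[>] 0, eLpNorm c 4 (P α : Measure E) ≤ K) :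
    Tendsto (fun α => eLpNorm (fun y => c (scaledOp T θ α y - G y)) 2 (P α : Measure E))
      (𝓝[>] 0) (𝓝 0) := by
  have hc2 : Measurable fun y => c y ^ 2 := hc.measurable.pow_const 2
  have hsq : ∀ ρ : Measure E, eLpNorm (fun y => c y ^ 2) 2 ρ = eLpNorm c 4 ρ ^ 2 := fun ρ => by
    have := eLpNorm_norm_rpow (p := 2) (μ := ρ) c (zero_lt_two' ℝ)
    norm_num at this
    exact this
  refine ENNReal.tendsto_nhds_zero.2 fun δ hδ => ?_
  obtain ⟨ε, hε, hεδ⟩ := ENNReal.exists_nnreal_pos_mul_lt hK (ENNReal.half_pos hδ.ne').ne'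
  obtain ⟨B, hB, hle⟩ := hc.exists_scaledOp_sub_le_mul_add hγ hT hfix hG hTG
    (NNReal.coe_pos.2 hε)
  have hlim : Tendsto (fun α : ℝ => ENNReal.ofReal (B * √α) * K ^ 2) (𝓝[>] 0) (𝓝 0) :=
    tendsto_ofReal_mul_nhdsGT_zero (by fun_prop) (by simp) (ENNReal.pow_ne_top hK)
  filter_upwards [hP, ENNReal.tendsto_nhds_zero.1 hlim _ (ENNReal.half_pos hδ.ne'),
    self_mem_nhdsWithin] with α hPα hα (hα0 : 0 < α)
  calc _ ≤ _ := eLpNorm_le_mul_add_mul one_le_two hc.measurable.aestronglyMeasurable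
        hc2.aestronglyMeasurable ε.coe_nonneg (mul_nonneg hB (Real.sqrt_nonneg α))
        (ae_of_all _ fun y => (abs_of_nonneg (hc.nonneg _)).trans_le (hle α hα0 y))
    _ ≤ ε * K + .ofReal (B * √α) * K ^ 2 := by
      rw [ENNReal.ofReal_coe_nnreal]
      gcongr
      · exact (eLpNorm_le_eLpNorm_of_exponent_le (by norm_num)
          hc.measurable.aestronglyMeasurable).trans hPα
      · rw [hsq]
        gcongr
    _ ≤ δ / 2 + δ / 2 := add_le_add hεδ.le hα
    _ = δ := ENNReal.add_halves δ

lemma eulerLaw_scaledOp (hT : Continuous T) {α : ℝ} (hα : 0 < α) (μ ω : Measure E)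
    [IsProbabilityMeasure μ] [IsProbabilityMeasure ω] :
    eulerLaw (scaledOp T θ α) α (μ.map fun x => (√α)⁻¹ • (x - θ)) (ω.map (√α • ·))
      = ((μ.prod ω).map fun p => p.1 + α • (T p.1 - p.1 + p.2)).map
          fun x => (√α)⁻¹ • (x - θ) := by
  have hscaled : Continuous (scaledOp T θ α) := by unfold scaledOp; fun_prop
  have hstep : Continuous fun p : E × E => p.1 + α • (T p.1 - p.1 + p.2) := by fun_prop
  have hrescale : Measurable fun x : E => (√α)⁻¹ • (x - θ) := by fun_prop
  have hs : 0 < √α := Real.sqrt_pos.2 hα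
  rw [eulerLaw, Measure.map_prod_map _ _ hrescale (by fun_prop),
    Measure.map_map (continuous_eulerStep hscaled α).measurable (by fun_prop),
    Measure.map_map hrescale hstep.measurable]
  congr 1
  funext ⟨x, w⟩
  have hα' : √α • w = (√α)⁻¹ • α • w := by rw [smul_smul, inv_mul_eq_div, Real.div_sqrt]
  simp only [Function.comp_apply, Prod.map_apply, eulerStep, scaledOp, hα',
    smul_inv_smul₀ hs.ne', add_sub_cancel]
  module

end Rescaling

section SmallTime

variable {E : Type*} [NormedAddCommGroup E] [NormedSpace ℝ E] [FiniteDimensional ℝ E]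
  [MeasurableSpace E] [BorelSpace E] {c : E → ℝ} {G : E → E} {γ : ℝ}
  {σ : ℝ → ProbabilityMeasure E} {ν ν' : Measure E}

/-- The law `ν` is invariant to first order in `τ` under the Euler step of length `τ` with drift
`y ↦ G y - y` and noise increment of law `σ τ`. When `σ τ` is centred Gaussian with covariance
`τ • Σ`, this is stationarity of `ν` for the diffusion `dY = (G Y - Y) dt + Σ^{1/2} dB`, expressed
without constructing that diffusion. -/
def IsInfinitesimallyInvariant (c : E → ℝ) (G : E → E) (σ : ℝ → ProbabilityMeasure E)
    (ν : Measure E) : Prop :=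
  Tendsto (fun τ => wasserstein c ν (eulerLaw G τ ν (σ τ)) / .ofReal τ) (𝓝[>] 0) (𝓝 0)

variable [IsProbabilityMeasure ν] [IsProbabilityMeasure ν']

lemma ofReal_mul_wasserstein_le_add_div (hc : IsNormLike c) (hγ0 : 0 ≤ γ) (hγ1 : γ ≤ 1)
    (hG : ∀ x y, c (G x - G y) ≤ γ * c (x - y)) (hW : wasserstein c ν ν' ≠ ∞) {τ : ℝ}
    (hτ : τ ∈ Set.Ioc 0 1) (κ : Measure E) [IsProbabilityMeasure κ] :
    .ofReal (1 - γ) * wasserstein c ν ν'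
      ≤ wasserstein c ν (eulerLaw G τ ν κ) / .ofReal τ
        + wasserstein c ν' (eulerLaw G τ ν' κ) / .ofReal τ := by
  obtain ⟨h0, h1⟩ := hτ
  set D := wasserstein c ν (eulerLaw G τ ν κ)
  set D' := wasserstein c ν' (eulerLaw G τ ν' κ)
  have hq : 0 ≤ 1 - (1 - γ) * τ := by nlinarith
  have hG' := hc.continuous_of_le_mul hG
  have := isProbabilityMeasure_eulerLaw hG' τ ν κ
  have := isProbabilityMeasure_eulerLaw hG' τ ν' κ
  have hcontract : wasserstein c (eulerLaw G τ ν κ) (eulerLaw G τ ν' κ)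
      ≤ .ofReal (1 - (1 - γ) * τ) * wasserstein c ν ν' := by
    simpa [wasserstein_self hc] using wasserstein_eulerLaw_le hc hγ0 hG h0.le h1 ν ν' κ κ
  have hsplit : .ofReal (1 - (1 - γ) * τ) * wasserstein c ν ν'
      + .ofReal ((1 - γ) * τ) * wasserstein c ν ν' ≤ .ofReal (1 - (1 - γ) * τ)
        * wasserstein c ν ν' + (D + D') :=
    calc _ = wasserstein c ν ν' := by
          rw [← add_mul, ← ENNReal.ofReal_add hq (by nlinarith)]; simp
      _ ≤ D + (wasserstein c (eulerLaw G τ ν κ) (eulerLaw G τ ν' κ)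
          + wasserstein c (eulerLaw G τ ν' κ) ν') :=
        (wasserstein_triangle hc _ _ _).trans (by gcongr; exact wasserstein_triangle hc _ _ _)
      _ ≤ D + (.ofReal (1 - (1 - γ) * τ) * wasserstein c ν ν' + D') := by
        rw [wasserstein_comm hc (eulerLaw G τ ν' κ)]
        gcongr
      _ = _ := by ring
  have hτ0 : ENNReal.ofReal τ ≠ 0 := (ENNReal.ofReal_pos.2 h0).ne'
  rw [← ENNReal.add_div, ENNReal.le_div_iff_mul_le (.inl hτ0) (.inl ENNReal.ofReal_ne_top),
    mul_right_comm, ← ENNReal.ofReal_mul (sub_nonneg.2 hγ1)]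
  exact ENNReal.le_of_add_le_add_left (ENNReal.mul_ne_top ENNReal.ofReal_ne_top hW) hsplit

theorem IsInfinitesimallyInvariant.eq (hν : IsInfinitesimallyInvariant c G σ ν)
    (hν' : IsInfinitesimallyInvariant c G σ ν') (hc : IsNormLike c) (hγ0 : 0 ≤ γ) (hγ1 : γ < 1)
    (hG : ∀ x y, c (G x - G y) ≤ γ * c (x - y)) (hW : wasserstein c ν ν' ≠ ∞) : ν = ν' := by
  have hlim : Tendsto (fun τ => wasserstein c ν (eulerLaw G τ ν (σ τ)) / .ofReal τ
      + wasserstein c ν' (eulerLaw G τ ν' (σ τ)) / .ofReal τ) (𝓝[>] 0) (𝓝 0) := by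
    simpa using Tendsto.add hν hν'
  have hzero : .ofReal (1 - γ) * wasserstein c ν ν' ≤ 0 := by
    refine ge_of_tendsto hlim ?_
    filter_upwards [Ioc_mem_nhdsGT one_pos] with τ hτ
    exact ofReal_mul_wasserstein_le_add_div hc hγ0 hγ1.le hG hW hτ _
  refine eq_of_wasserstein_eq_zero hc ((mul_eq_zero.1 (nonpos_iff_eq_zero.1 hzero)).resolve_left ?_)
  simpa using hγ1

end SmallTime

section Limit

lemma IsNormLike.eLpNorm_le {E : Type*} [NormedAddCommGroup E] [NormedSpace ℝ E]
    [MeasurableSpace E] {c : E → ℝ} (hc : IsNormLike c) {C : ℝ} (hC : ∀ x, c x ≤ C * ‖x‖) (p : ℝ≥0∞)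
    (μ : Measure E) : eLpNorm c p μ ≤ .ofReal C * eLpNorm id p μ :=
  eLpNorm_le_mul_eLpNorm_of_ae_le_mul (ae_of_all _ fun x => by
    simpa [abs_of_nonneg (hc.nonneg x)] using hC x) p

/-- A bound for the defect, per unit time, of the first-order invariance over a time interval of
length `τ`: `K` bounds the stationary moments and `C` compares the given norm with the Euclidean
one. -/
def invarianceDefect {E : Type*} [NormedAddCommGroup E] [MeasurableSpace E] (ω : Measure E)
    (C : ℝ) (K : ℝ≥0∞) (τ : ℝ) : ℝ≥0∞ :=
  2 * (.ofReal τ * (2 * K) + .ofReal C * (.ofReal (2 * √τ) * eLpNorm id 4 ω))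

lemma IsNoise.tendsto_invarianceDefect {E : Type*} [NormedAddCommGroup E] [NormedSpace ℝ E]
    [MeasurableSpace E] {ω : Measure E} (h : IsNoise ω) (C : ℝ) {K : ℝ≥0∞} (hK : K ≠ ∞) :
    Tendsto (invarianceDefect ω C K) (𝓝[>] 0) (𝓝 0) := by
  have htime : Tendsto (fun τ : ℝ => ENNReal.ofReal τ * (2 * K)) (𝓝[>] 0) (𝓝 0) :=
    tendsto_ofReal_mul_nhdsGT_zero continuous_id rfl (ENNReal.mul_ne_top ENNReal.ofNat_ne_top hK)
  have hnoise : Tendsto (fun τ : ℝ => ENNReal.ofReal (2 * √τ) * eLpNorm id 4 ω) (𝓝[>] 0) (𝓝 0) :=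
    tendsto_ofReal_mul_nhdsGT_zero (by fun_prop) (by simp) h.memLp.eLpNorm_ne_top
  unfold invarianceDefect
  simpa using ENNReal.Tendsto.const_mul (a := 2) (htime.add
    (ENNReal.Tendsto.const_mul (a := .ofReal C) hnoise (.inr ENNReal.ofReal_ne_top)))
    (.inr ENNReal.ofNat_ne_top)

variable {E : Type*} [NormedAddCommGroup E] [InnerProductSpace ℝ E] [FiniteDimensional ℝ E]
  [MeasurableSpace E] [BorelSpace E] {c : E → ℝ} {G : E → E} {γ : ℝ} {ω : Measure E}
  [IsProbabilityMeasure ω]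

lemma IsNoise.eLpNorm_stationary_le (h : IsNoise ω) (hc : IsNormLike c) {C : ℝ}
    (hC : ∀ x, c x ≤ C * ‖x‖) (hγ0 : 0 ≤ γ) (hγ1 : γ < 1) {U : E → E}
    (hU : ∀ x y, c (U x - U y) ≤ γ * c (x - y)) (hU0 : U 0 = 0) {α : ℝ}
    (hα : α ∈ Set.Ioc 0 1) {ρ : Measure E} [IsProbabilityMeasure ρ] (hρ : eLpNorm c 2 ρ ≠ ∞)
    (hstat : eulerLaw U α ρ (ω.map (√α • ·)) = ρ) :
    eLpNorm c 4 ρ ≤ .ofReal C * (2 * eLpNorm id 4 ω) / .ofReal (1 - γ) := by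
  have : IsProbabilityMeasure (ω.map (√α • ·)) := Measure.isProbabilityMeasure_map (by fun_prop)
  refine eLpNorm_le_of_eulerLaw_eq hc hγ0 hγ1 hU hU0 hα.1 hα.2 (by norm_num)
    ENNReal.ofNat_ne_top (fun k => ?_) hρ hstat
  have hlinear : eulerStep (0 : E → E) α = fun p => (1 - α) • p.1 + p.2 := by
    funext p; simp only [eulerStep, Pi.zero_apply]; module
  rw [hlinear]
  refine (hc.eLpNorm_le hC 4 _).trans ?_
  gcongr
  exact h.eLpNorm_chainLaw_smul_add_le hα.1.le hα.2 k

lemma IsNoise.wasserstein_eulerLaw_rescaledSumLaw_le (h : IsNoise ω) (hc : IsNormLike c) {C : ℝ}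
    (hC : ∀ x, c x ≤ C * ‖x‖) (hγ : γ ≤ 1) {U : E → E}
    (hU : ∀ x y, c (U x - U y) ≤ γ * c (x - y)) (hU0 : U 0 = 0)
    (hG : ∀ x y, c (G x - G y) ≤ γ * c (x - y)) (hG0 : G 0 = 0) {α τ : ℝ} (hα : 0 < α)
    (hτ : 0 ≤ τ) {ρ : Measure E} [IsProbabilityMeasure ρ]
    (hstat : eulerLaw U α ρ (ω.map (√α • ·)) = ρ) {K : ℝ≥0∞} (hρ : eLpNorm c 2 ρ ≤ K) :
    wasserstein c ρ (eulerLaw G τ ρ (rescaledSumLaw ω τ α))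
      ≤ .ofReal τ * (eLpNorm (fun y => c (U y - G y)) 2 ρ + invarianceDefect ω C K τ)
        + .ofReal α * (2 * K) := by
  have : IsProbabilityMeasure (ω.map (√α • ·)) := Measure.isProbabilityMeasure_map (by fun_prop)
  set n := ⌊τ / α⌋₊
  have hn : n * α ≤ τ := natFloor_div_mul_le hα hτ
  have hn' : |n * α - τ| ≤ α := by
    have hlt : τ < (n + 1) * α := (div_lt_iff₀ hα).1 (Nat.lt_floor_add_one (τ / α))
    rw [abs_le]; constructor <;> linarith
  have hsum : ∀ k ≤ n, eLpNorm c 2 (sumLaw (ω.map (√α • ·)) k)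
      ≤ .ofReal C * (.ofReal (2 * √τ) * eLpNorm id 4 ω) := fun k hk => by
    refine (hc.eLpNorm_le hC 2 _).trans ?_
    gcongr
    exact (eLpNorm_le_eLpNorm_of_exponent_le (by norm_num) (by fun_prop)).trans
      (h.eLpNorm_sumLaw_map_smul_le hα.le (le_trans (by gcongr) hn))
  have := isProbabilityMeasure_eulerLaw (hc.continuous_of_le_mul hG) (n * α) ρ
    (sumLaw (ω.map (√α • ·)) n)
  calc _ ≤ wasserstein c ρ (eulerLaw G (n * α) ρ (sumLaw (ω.map (√α • ·)) n))
        + wasserstein c (eulerLaw G (n * α) ρ (sumLaw (ω.map (√α • ·)) n))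
            (eulerLaw G τ ρ (sumLaw (ω.map (√α • ·)) n)) := wasserstein_triangle hc _ _ _
    _ ≤ .ofReal (n * α) * (eLpNorm (fun y => c (U y - G y)) 2 ρ
          + 2 * (.ofReal (n * α) * (2 * eLpNorm c 2 ρ)
            + .ofReal C * (.ofReal (2 * √τ) * eLpNorm id 4 ω)))
        + .ofReal |n * α - τ| * (2 * eLpNorm c 2 ρ) :=
      add_le_add (wasserstein_eulerLaw_sumLaw_le hc hγ hU hU0 hG hα.le hstat hsum)
        (wasserstein_eulerLaw_eulerLaw_le hc hγ hG hG0 _ _ _ _)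
    _ ≤ _ := by unfold invarianceDefect; gcongr

end Limit

section Stationary

variable {E : Type*} [NormedAddCommGroup E] [InnerProductSpace ℝ E] [FiniteDimensional ℝ E]
  [MeasurableSpace E] [BorelSpace E] {c : E → ℝ} {T G : E → E} {θ : E} {γ τ : ℝ}
  {ω ω' : Measure E} [IsProbabilityMeasure ω] [IsProbabilityMeasure ω']
  {P : ℝ → ProbabilityMeasure E} {σ : ℝ → ProbabilityMeasure E} {Q : ProbabilityMeasure E}

lemma IsNoise.tendsto_rescaledSumLaw_of_integral_inner_sq_eq (h : IsNoise ω) (h' : IsNoise ω')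
    (hcov : ∀ t, ∫ x, inner ℝ t x ^ 2 ∂ω' = ∫ x, inner ℝ t x ^ 2 ∂ω) (hτ : 0 ≤ τ)
    (hQ : Tendsto (rescaledSumLaw ω τ) (𝓝[>] 0) (𝓝 Q)) :
    Tendsto (rescaledSumLaw ω' τ) (𝓝[>] 0) (𝓝 Q) := by
  obtain ⟨R, hR, hRφ⟩ := h.exists_tendsto_rescaledSumLaw hτ
  obtain ⟨R', hR', hR'φ⟩ := h'.exists_tendsto_rescaledSumLaw hτ
  have hRR' : (R' : Measure E) = R := Measure.ext_of_charFun <| by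
    ext t
    rw [hR'φ, hRφ, hcov]
  obtain rfl : R' = R := Subtype.ext hRR'
  rwa [tendsto_nhds_unique hQ hR]

lemma IsNoise.tendsto_wasserstein_rescaledSumLaw (h : IsNoise ω) (hc : IsNormLike c)
    (hτ : 0 ≤ τ) (hQ : Tendsto (rescaledSumLaw ω τ) (𝓝[>] 0) (𝓝 Q)) :
    Tendsto (fun α => wasserstein c (rescaledSumLaw ω τ α : Measure E) Q) (𝓝[>] 0) (𝓝 0) := by
  obtain ⟨C, -, hC⟩ := hc.exists_le_norm
  refine tendsto_wasserstein_of_tendsto hc hQ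
    (K := .ofReal C * (.ofReal (2 * √τ) * eLpNorm id 4 ω)) ?_ ?_
  · exact ENNReal.mul_ne_top ENNReal.ofReal_ne_top
      (ENNReal.mul_ne_top ENNReal.ofReal_ne_top h.memLp.eLpNorm_ne_top)
  · filter_upwards [self_mem_nhdsWithin] with α hα
    refine (hc.eLpNorm_le hC 4 _).trans ?_
    gcongr
    exact h.eLpNorm_sumLaw_map_smul_le (le_of_lt hα) (natFloor_div_mul_le hα hτ)

lemma wasserstein_self_eulerLaw_le (hc : IsNormLike c) (hγ0 : 0 ≤ γ) (hγ1 : γ ≤ 1)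
    (hG : ∀ x y, c (G x - G y) ≤ γ * c (x - y)) (h0 : 0 ≤ τ) (h1 : τ ≤ 1)
    (ρ ρ' κ κ' : Measure E) [IsProbabilityMeasure ρ] [IsProbabilityMeasure ρ']
    [IsProbabilityMeasure κ] :
    wasserstein c ρ' (eulerLaw G τ ρ' κ') ≤ wasserstein c ρ (eulerLaw G τ ρ κ)
      + (2 * wasserstein c ρ ρ' + wasserstein c κ κ') := by
  have := isProbabilityMeasure_eulerLaw (hc.continuous_of_le_mul hG) τ ρ κ
  have hstep : wasserstein c (eulerLaw G τ ρ κ) (eulerLaw G τ ρ' κ')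
      ≤ wasserstein c ρ ρ' + wasserstein c κ κ' := by
    refine (wasserstein_eulerLaw_le hc hγ0 hG h0 h1 ρ ρ' κ κ').trans ?_
    gcongr
    exact mul_le_of_le_one_left' (ENNReal.ofReal_le_one.2 (by nlinarith))
  calc wasserstein c ρ' (eulerLaw G τ ρ' κ')
      ≤ wasserstein c ρ' ρ + (wasserstein c ρ (eulerLaw G τ ρ κ)
          + wasserstein c (eulerLaw G τ ρ κ) (eulerLaw G τ ρ' κ')) :=
        (wasserstein_triangle hc _ _ _).trans (by gcongr; exact wasserstein_triangle hc _ _ _)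
    _ ≤ wasserstein c ρ ρ' + (wasserstein c ρ (eulerLaw G τ ρ κ)
          + (wasserstein c ρ ρ' + wasserstein c κ κ')) := by
        rw [wasserstein_comm hc ρ' ρ]
        gcongr
    _ = _ := by ring

/-- For all small `α`, the law `P α` has finite second moment and is stationary for the stochastic
approximation recursion with stepsize `α`, noise of law `ω` and state `y = (x - θ) / √α`. -/
def IsScaledStationary (c : E → ℝ) (T : E → E) (θ : E) (ω : Measure E)
    (P : ℝ → ProbabilityMeasure E) : Prop :=
  ∀ᶠ α in 𝓝[>] 0, eLpNorm c 2 (P α : Measure E) ≠ ∞ ∧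
    eulerLaw (scaledOp T θ α) α (P α) (ω.map (√α • ·)) = P α

namespace IsScaledStationary

lemma exists_eLpNorm_four_le (hP : IsScaledStationary c T θ ω P) (h : IsNoise ω)
    (hc : IsNormLike c) (hγ0 : 0 ≤ γ) (hγ1 : γ < 1)
    (hT : ∀ x y, c (T x - T y) ≤ γ * c (x - y)) (hfix : T θ = θ) :
    ∃ K ≠ ∞, ∀ᶠ α in 𝓝[>] 0, eLpNorm c 4 (P α : Measure E) ≤ K := by
  obtain ⟨C, -, hC⟩ := hc.exists_le_norm
  refine ⟨.ofReal C * (2 * eLpNorm id 4 ω) / .ofReal (1 - γ), ENNReal.div_ne_top ?_ ?_, ?_⟩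
  · exact ENNReal.mul_ne_top ENNReal.ofReal_ne_top
      (ENNReal.mul_ne_top ENNReal.ofNat_ne_top h.memLp.eLpNorm_ne_top)
  · simpa using hγ1
  · filter_upwards [hP, Ioc_mem_nhdsGT one_pos] with α ⟨hα2, hstat⟩ hα
    exact h.eLpNorm_stationary_le hc hC hγ0 hγ1 (hc.scaledOp_sub_le hT θ hα.1)
      (scaledOp_zero hfix α) hα hα2 hstat

lemma wasserstein_eulerLaw_le_invarianceDefect (hP : IsScaledStationary c T θ ω P)
    (h : IsNoise ω) (hc : IsNormLike c) {C : ℝ} (hC : ∀ x, c x ≤ C * ‖x‖) (hγ0 : 0 ≤ γ)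
    (hγ1 : γ ≤ 1) (hT : ∀ x y, c (T x - T y) ≤ γ * c (x - y)) (hfix : T θ = θ)
    (hG : ∀ r : ℝ, 0 ≤ r → ∀ x, G (r • x) = r • G x)
    (hTG : (fun h => T (θ + h) - θ - G h) =o[𝓝 0] id) {K : ℝ≥0∞} (hK : K ≠ ∞)
    (hPK : ∀ᶠ α in 𝓝[>] 0, eLpNorm c 4 (P α : Measure E) ≤ K) {l : Filter ℝ} [l.NeBot]
    (hl : l ≤ 𝓝[>] 0) {ν : Measure E} [IsProbabilityMeasure ν]
    (hν : Tendsto (fun α => wasserstein c (P α : Measure E) ν) l (𝓝 0)) (hτ : τ ∈ Set.Ioc 0 1)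
    (hQ : Tendsto (rescaledSumLaw ω τ) (𝓝[>] 0) (𝓝 Q)) :
    wasserstein c ν (eulerLaw G τ ν Q) ≤ .ofReal τ * invarianceDefect ω C K τ := by
  have hGγ := hc.sub_le_of_isLittleO hT hG hTG
  have hG0 : G 0 = 0 := by simpa using hG 0 le_rfl 0
  have hdrift : Tendsto (fun α => .ofReal τ * (eLpNorm (fun y => c (scaledOp T θ α y - G y)) 2
      (P α : Measure E) + invarianceDefect ω C K τ)) l
      (𝓝 (.ofReal τ * (0 + invarianceDefect ω C K τ))) :=
    ENNReal.Tendsto.const_mul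
      (((hc.tendsto_eLpNorm_scaledOp_sub hγ0 hT hfix hG hTG hK hPK).mono_left hl).add_const _)
      (.inr ENNReal.ofReal_ne_top)
  have hround : Tendsto (fun α : ℝ => .ofReal α * (2 * K)) l (𝓝 0) :=
    (tendsto_ofReal_mul_nhdsGT_zero continuous_id rfl
      (ENNReal.mul_ne_top ENNReal.ofNat_ne_top hK)).mono_left hl
  have hcompare : Tendsto (fun α => 2 * wasserstein c (P α : Measure E) ν
      + wasserstein c (rescaledSumLaw ω τ α : Measure E) Q) l (𝓝 (2 * 0 + 0)) :=
    (ENNReal.Tendsto.const_mul hν (.inr ENNReal.ofNat_ne_top)).add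
      ((h.tendsto_wasserstein_rescaledSumLaw hc hτ.1.le hQ).mono_left hl)
  refine ge_of_tendsto (by simpa using (hdrift.add hround).add hcompare) ?_
  filter_upwards [hl hP, hl hPK, hl self_mem_nhdsWithin] with α hstat hPα (hα : 0 < α)
  refine (wasserstein_self_eulerLaw_le hc hγ0 hγ1 hGγ hτ.1.le hτ.2 (P α) ν
    (rescaledSumLaw ω τ α) Q).trans ?_
  gcongr
  exact h.wasserstein_eulerLaw_rescaledSumLaw_le hc hC hγ1 (hc.scaledOp_sub_le hT θ hα)
    (scaledOp_zero hfix α) hGγ hG0 hα hτ.1.le hstat.2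
    ((eLpNorm_le_eLpNorm_of_exponent_le (by norm_num) hc.measurable.aestronglyMeasurable).trans hPα)

lemma isInfinitesimallyInvariant_of_tendsto (hP : IsScaledStationary c T θ ω P)
    (h : IsNoise ω) (hc : IsNormLike c) (hγ0 : 0 ≤ γ) (hγ1 : γ < 1)
    (hT : ∀ x y, c (T x - T y) ≤ γ * c (x - y)) (hfix : T θ = θ)
    (hG : ∀ r : ℝ, 0 ≤ r → ∀ x, G (r • x) = r • G x)
    (hTG : (fun h => T (θ + h) - θ - G h) =o[𝓝 0] id)
    (hσ : ∀ τ > 0, Tendsto (rescaledSumLaw ω τ) (𝓝[>] 0) (𝓝 (σ τ))) {l : Filter ℝ} [l.NeBot]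
    (hl : l ≤ 𝓝[>] 0) {ν : Measure E} [IsProbabilityMeasure ν]
    (hν : Tendsto (fun α => wasserstein c (P α : Measure E) ν) l (𝓝 0)) :
    IsInfinitesimallyInvariant c G σ ν := by
  obtain ⟨C, -, hC⟩ := hc.exists_le_norm
  obtain ⟨K, hK, hPK⟩ := hP.exists_eLpNorm_four_le h hc hγ0 hγ1 hT hfix
  refine tendsto_of_tendsto_of_tendsto_of_le_of_le' tendsto_const_nhds
    (h.tendsto_invarianceDefect C hK) (Eventually.of_forall fun _ => zero_le) ?_
  filter_upwards [Ioc_mem_nhdsGT one_pos] with τ hτ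
  exact ENNReal.div_le_of_le_mul' (hP.wasserstein_eulerLaw_le_invarianceDefect h hc hC hγ0 hγ1.le
    hT hfix hG hTG hK hPK hl hν hτ (hσ τ hτ.1))

lemma exists_tendsto_wasserstein_ultrafilter (hP : IsScaledStationary c T θ ω P)
    (h : IsNoise ω) (hc : IsNormLike c) (hγ0 : 0 ≤ γ) (hγ1 : γ < 1)
    (hT : ∀ x y, c (T x - T y) ≤ γ * c (x - y)) (hfix : T θ = θ) (u : Ultrafilter ℝ)
    (hu : (u : Filter ℝ) ≤ 𝓝[>] 0) : ∃ Q : ProbabilityMeasure E, eLpNorm c 2 (Q : Measure E) ≠ ∞ ∧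
      Tendsto (fun α => wasserstein c (P α : Measure E) Q) u (𝓝 0) := by
  obtain ⟨K, hK, hPK⟩ := hP.exists_eLpNorm_four_le h hc hγ0 hγ1 hT hfix
  obtain ⟨Q, hQ⟩ := exists_tendsto_of_eLpNorm_le hc (by norm_num) ENNReal.ofNat_ne_top hK u (hu hPK)
  have hQ4 : eLpNorm c 4 (Q : Measure E) ≤ K :=
    eLpNorm_le_of_tendsto hQ hc.continuous (by norm_num) ENNReal.ofNat_ne_top (hu hPK)
  have hQ2 : eLpNorm c 2 (Q : Measure E) ≤ K :=
    (eLpNorm_le_eLpNorm_of_exponent_le (by norm_num) hc.measurable.aestronglyMeasurable).trans hQ4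
  exact ⟨Q, ne_top_of_le_ne_top hK hQ2, tendsto_wasserstein_of_tendsto hc hQ hK (hu hPK)⟩

theorem tendsto_wasserstein_of_isInfinitesimallyInvariant (hP : IsScaledStationary c T θ ω P)
    (h : IsNoise ω) (hc : IsNormLike c) (hγ0 : 0 ≤ γ) (hγ1 : γ < 1)
    (hT : ∀ x y, c (T x - T y) ≤ γ * c (x - y)) (hfix : T θ = θ)
    (hG : ∀ r : ℝ, 0 ≤ r → ∀ x, G (r • x) = r • G x)
    (hTG : (fun h => T (θ + h) - θ - G h) =o[𝓝 0] id)
    (hσ : ∀ τ > 0, Tendsto (rescaledSumLaw ω τ) (𝓝[>] 0) (𝓝 (σ τ)))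
    (hQ2 : eLpNorm c 2 (Q : Measure E) ≠ ∞) (hQ : IsInfinitesimallyInvariant c G σ Q) :
    Tendsto (fun α => wasserstein c (P α : Measure E) Q) (𝓝[>] 0) (𝓝 0) := by
  refine (tendsto_iff_ultrafilter _ _ _).2 fun u hu => ?_
  obtain ⟨R, hR2, hR⟩ := hP.exists_tendsto_wasserstein_ultrafilter h hc hγ0 hγ1 hT hfix u hu
  have hRinv := hP.isInfinitesimallyInvariant_of_tendsto h hc hγ0 hγ1 hT hfix hG hTG hσ hu hR
  have hRQ : (R : Measure E) = Q :=
    hRinv.eq hQ hc hγ0 hγ1 (hc.sub_le_of_isLittleO hT hG hTG) <|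
      ne_top_of_le_ne_top (ENNReal.add_ne_top.2 ⟨hR2, hQ2⟩) (wasserstein_le_add hc _ _)
  rwa [← hRQ]

theorem exists_tendsto_wasserstein (hP : IsScaledStationary c T θ ω P)
    (h : IsNoise ω) (hc : IsNormLike c) (hγ0 : 0 ≤ γ) (hγ1 : γ < 1)
    (hT : ∀ x y, c (T x - T y) ≤ γ * c (x - y)) (hfix : T θ = θ)
    (hG : ∀ r : ℝ, 0 ≤ r → ∀ x, G (r • x) = r • G x)
    (hTG : (fun h => T (θ + h) - θ - G h) =o[𝓝 0] id) :
    ∃ Q : ProbabilityMeasure E, eLpNorm c 2 (Q : Measure E) ≠ ∞ ∧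
      ∀ ω' : Measure E, ∀ [IsProbabilityMeasure ω'], IsNoise ω' →
        (∀ t, ∫ x, inner ℝ t x ^ 2 ∂ω' = ∫ x, inner ℝ t x ^ 2 ∂ω) →
        ∀ P' : ℝ → ProbabilityMeasure E, IsScaledStationary c T θ ω' P' →
          Tendsto (fun α => wasserstein c (P' α : Measure E) Q) (𝓝[>] 0) (𝓝 0) := by
  have : Nonempty (ProbabilityMeasure E) := ⟨P 0⟩
  choose! σ hσ _ using fun τ (hτ : τ > 0) => h.exists_tendsto_rescaledSumLaw hτ.le
  obtain ⟨Q, hQ2, hQ⟩ := hP.exists_tendsto_wasserstein_ultrafilter h hc hγ0 hγ1 hT hfix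
    (.of (𝓝[>] 0)) (Ultrafilter.of_le _)
  have hQinv := hP.isInfinitesimallyInvariant_of_tendsto h hc hγ0 hγ1 hT hfix hG hTG hσ
    (Ultrafilter.of_le _) hQ
  exact ⟨Q, hQ2, fun ω' _ h' hcov P' hP' =>
    hP'.tendsto_wasserstein_of_isInfinitesimallyInvariant h' hc hγ0 hγ1 hT hfix hG hTG
      (fun τ hτ => h.tendsto_rescaledSumLaw_of_integral_inner_sq_eq h' hcov hτ.le (hσ τ hτ))
      hQ2 hQinv⟩

end IsScaledStationary

end Stationary

section HomogeneousDerivative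

lemma isLittleO_comp_sub_comp_fderiv {X V W : Type*} [NormedAddCommGroup X] [NormedSpace ℝ X]
    [NormedAddCommGroup V] [NormedSpace ℝ V] [ProperSpace V] [NormedAddCommGroup W]
    [NormedSpace ℝ W] {g : V → W} {F : X → V} {A : X →L[ℝ] V} (hg : Continuous g)
    (hghom : ∀ r : ℝ, 0 ≤ r → ∀ x, g (r • x) = r • g x) (hF0 : F 0 = 0)
    (hF : HasFDerivAt F A 0) : (fun h => g (F h) - g (A h)) =o[𝓝 0] id := by
  refine Asymptotics.isLittleO_iff.2 fun ε hε => ?_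
  have hunif := (isCompact_closedBall (0 : V) ‖A‖).uniformContinuousAt_of_continuousAt g
    (fun _ _ => hg.continuousAt) (Metric.dist_mem_uniformity hε)
  obtain ⟨δ, hδ, hgδ⟩ := Metric.mem_uniformity_dist.1 hunif
  filter_upwards [(hasFDerivAt_iff_isLittleO_nhds_zero.1 hF).def (half_pos hδ)] with h hFh
  rcases eq_or_ne h 0 with rfl | hne
  · simp [hF0]
  have hpos : 0 < ‖h‖ := norm_pos_iff.2 hne
  have hscale : ∀ v, g v = ‖h‖ • g (‖h‖⁻¹ • v) := fun v => by
    rw [← hghom _ hpos.le, smul_inv_smul₀ hpos.ne']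
  have hA : ‖h‖⁻¹ • A h ∈ Metric.closedBall (0 : V) ‖A‖ := by
    rw [mem_closedBall_zero_iff, norm_smul, norm_inv, norm_norm, inv_mul_le_iff₀ hpos, mul_comm]
    exact A.le_opNorm h
  have hclose : dist (‖h‖⁻¹ • A h) (‖h‖⁻¹ • F h) < δ := by
    rw [dist_comm, dist_eq_norm, ← smul_sub, norm_smul, norm_inv, norm_norm, inv_mul_lt_iff₀ hpos]
    have hFA : ‖F h - A h‖ ≤ δ / 2 * ‖h‖ := by simpa [hF0] using hFh
    nlinarith
  have hgclose : dist (g (‖h‖⁻¹ • A h)) (g (‖h‖⁻¹ • F h)) < ε := hgδ hclose hA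
  rw [hscale (F h), hscale (A h), ← smul_sub, norm_smul, norm_norm, ← dist_eq_norm, dist_comm,
    mul_comm]
  exact mul_le_mul_of_nonneg_right hgclose.le hpos.le

lemma isLittleO_sub_comp_fderiv {X V : Type*} [NormedAddCommGroup X] [NormedSpace ℝ X]
    [NormedAddCommGroup V] [NormedSpace ℝ V] [ProperSpace V] {T : X → X} {θ : X} {g : V → X}
    {F : X → V} {A : X →L[ℝ] V} (hg : Continuous g)
    (hghom : ∀ r : ℝ, 0 ≤ r → ∀ x, g (r • x) = r • g x) (hF0 : F 0 = 0)
    (hF : HasFDerivAt F A 0) (hT : ∀ᶠ x in 𝓝 θ, T x = θ + g (F (x - θ))) :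
    (fun h => T (θ + h) - θ - g (A h)) =o[𝓝 0] id := by
  have hθ : Tendsto (θ + ·) (𝓝 0) (𝓝 θ) := (continuous_const_add θ).tendsto' 0 θ (add_zero θ)
  refine (isLittleO_comp_sub_comp_fderiv hg hghom hF0 hF).congr' ?_ .rfl
  filter_upwards [hθ.eventually hT] with h hh
  rw [hh, add_sub_cancel_left, add_sub_cancel_left]

end HomogeneousDerivative

section Moments

variable {E : Type*} [NormedAddCommGroup E] [NormedSpace ℝ E] [FiniteDimensional ℝ E]
  [MeasurableSpace E] [BorelSpace E] {c : E → ℝ} {μ ν : Measure E}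

lemma IsNormLike.eLpNorm_ne_top_iff (hc : IsNormLike c) {p : ℝ≥0∞} :
    eLpNorm c p μ ≠ ∞ ↔ MemLp id p μ := by
  refine ⟨fun h => ⟨aestronglyMeasurable_id, ?_⟩, fun h => ?_⟩
  · obtain ⟨M, -, hM⟩ := hc.exists_norm_le
    exact (eLpNorm_le_mul_eLpNorm_of_ae_le_mul (ae_of_all _ fun x => by
      simpa [abs_of_nonneg (hc.nonneg x)] using hM x) p).trans_lt
        (ENNReal.mul_lt_top ENNReal.ofReal_lt_top h.lt_top)
  · obtain ⟨C, -, hC⟩ := hc.exists_le_norm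
    exact ne_top_of_le_ne_top (ENNReal.mul_ne_top ENNReal.ofReal_ne_top h.eLpNorm_ne_top)
      (hc.eLpNorm_le hC p μ)

lemma IsNormLike.eLpNorm_two_ne_top_iff (hc : IsNormLike c) :
    eLpNorm c 2 μ ≠ ∞ ↔ Integrable (fun x => ‖x‖ ^ 2) μ :=
  hc.eLpNorm_ne_top_iff.trans (memLp_two_iff_integrable_sq_norm aestronglyMeasurable_id)

lemma memLp_map_smul_sub {p : ℝ≥0∞} [IsFiniteMeasure μ] (h : MemLp id p μ) (a : ℝ) (θ : E) :
    MemLp id p (μ.map fun x => a • (x - θ)) :=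
  (memLp_map_measure_iff aestronglyMeasurable_id (by fun_prop)).2
    ((h.sub (memLp_const θ)).const_smul a)

lemma tendsto_W2dist_iff {ι : Type*} {l : Filter ι} (hc : IsNormLike c)
    {P : ι → ProbabilityMeasure E} [IsProbabilityMeasure ν]
    (hP : ∀ᶠ i in l, eLpNorm c 2 (P i : Measure E) ≠ ∞) (hν : eLpNorm c 2 ν ≠ ∞) :
    Tendsto (fun i => W2dist c (P i : Measure E) ν) l (𝓝 0) ↔
      Tendsto (fun i => wasserstein c (P i : Measure E) ν) l (𝓝 0) := by
  have hW : (fun i => W2dist c (P i : Measure E) ν)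
      =ᶠ[l] fun i => (wasserstein c (P i : Measure E) ν).toReal :=
    hP.mono fun i hi => W2dist_eq_toReal_wasserstein hc hi hν
  have hfin : ∀ᶠ i in l, wasserstein c (P i : Measure E) ν ≠ ∞ := hP.mono fun i hi =>
    ne_top_of_le_ne_top (ENNReal.add_ne_top.2 ⟨hi, hν⟩) (wasserstein_le_add hc _ _)
  rw [tendsto_congr' hW]
  refine ⟨fun h => ?_, fun h => (ENNReal.tendsto_toReal ENNReal.zero_ne_top).comp h⟩
  simpa using (ENNReal.tendsto_ofReal h).congr' (hfin.mono fun i hi => ENNReal.ofReal_toReal hi)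

lemma inv_sqrt_mul_norm_integral_sub_eq [IsProbabilityMeasure μ]
    (hμ : Integrable (fun x => x) μ) (θ y : E) {α : ℝ} (hα : 0 < α) :
    (√α)⁻¹ * ‖∫ x, x ∂μ - θ - √α • y‖ = ‖∫ x, x ∂(μ.map fun x => (√α)⁻¹ • (x - θ)) - y‖ := by
  have hs : 0 < √α := Real.sqrt_pos.2 hα
  have hmean : ∫ x, x ∂(μ.map fun x => (√α)⁻¹ • (x - θ)) = (√α)⁻¹ • (∫ x, x ∂μ - θ) := by
    rw [integral_map (φ := fun x => (√α)⁻¹ • (x - θ)) (f := fun x => x) (by fun_prop)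
      aestronglyMeasurable_id, integral_smul, integral_sub hμ (integrable_const _), integral_const,
      probReal_univ, one_smul]
  calc (√α)⁻¹ * ‖∫ x, x ∂μ - θ - √α • y‖ = ‖(√α)⁻¹ • (∫ x, x ∂μ - θ - √α • y)‖ := by
        rw [norm_smul, Real.norm_of_nonneg (inv_nonneg.2 hs.le)]
    _ = _ := by rw [hmean, smul_sub _ (_ - θ), inv_smul_smul₀ hs.ne']

end Moments

section Fluctuations

variable {E : Type*} [NormedAddCommGroup E] [InnerProductSpace ℝ E] [FiniteDimensional ℝ E]
  [MeasurableSpace E] [BorelSpace E] {c : E → ℝ} {T G : E → E} {θ : E} {γ : ℝ}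
  {ω : Measure E} {μ : ℝ → Measure E} {P : ℝ → ProbabilityMeasure E}
  {ν ν' : Measure E} [IsProbabilityMeasure ν] [IsProbabilityMeasure ν']

lemma isNoise_of_integrable_norm_pow_four (h4 : Integrable (fun x => ‖x‖ ^ 4) ω)
    (hmean : ∫ x, x ∂ω = 0) : IsNoise ω := by
  refine ⟨(integrable_norm_rpow_iff aestronglyMeasurable_id (by norm_num)
    ENNReal.ofNat_ne_top).1 ?_, hmean⟩
  simpa using h4

/-- `μ` is a stationary law with finite second moment of the stochastic approximation kernel with
operator `T`, stepsize `α` and noise law `ω`. -/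
def IsStationaryLaw (T : E → E) (α : ℝ) (ω μ : Measure E) : Prop :=
  IsProbabilityMeasure μ ∧ Integrable (fun x => ‖x‖ ^ 2) μ ∧
    (μ.prod ω).map (fun p => p.1 + α • (T p.1 - p.1 + p.2)) = μ

lemma IsScaledStationary.tendsto_W2dist_map_iff (hP : IsScaledStationary c T θ ω P)
    (hPμ : ∀ᶠ α in 𝓝[>] 0, (P α : Measure E) = (μ α).map fun x => (√α)⁻¹ • (x - θ))
    (hc : IsNormLike c) (hν : Integrable (fun x => ‖x‖ ^ 2) ν) :
    Tendsto (fun α => W2dist c ((μ α).map fun x => (√α)⁻¹ • (x - θ)) ν) (𝓝[>] 0) (𝓝 0) ↔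
      Tendsto (fun α => wasserstein c (P α : Measure E) ν) (𝓝[>] 0) (𝓝 0) := by
  rw [← tendsto_W2dist_iff hc (hP.mono fun α h => h.1) (hc.eLpNorm_two_ne_top_iff.2 hν)]
  exact tendsto_congr' (hPμ.mono fun α h => by simp only [h])

lemma eq_of_tendsto_wasserstein (hc : IsNormLike c) {ι : Type*} {l : Filter ι} [l.NeBot]
    [l.IsCountablyGenerated] {P : ι → ProbabilityMeasure E}
    (h : Tendsto (fun i => wasserstein c (P i : Measure E) ν) l (𝓝 0))
    (h' : Tendsto (fun i => wasserstein c (P i : Measure E) ν') l (𝓝 0)) : ν = ν' :=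
  congrArg ((↑) : ProbabilityMeasure E → Measure E) <| tendsto_nhds_unique
    (tendsto_of_tendsto_wasserstein (Q := ⟨ν, ‹_›⟩) hc h)
    (tendsto_of_tendsto_wasserstein (Q := ⟨ν', ‹_›⟩) hc h')

lemma IsScaledStationary.tendsto_bias (hP : IsScaledStationary c T θ ω P)
    (hPμ : ∀ᶠ α in 𝓝[>] 0, (P α : Measure E) = (μ α).map fun x => (√α)⁻¹ • (x - θ))
    (hμ : ∀ᶠ α in 𝓝[>] 0, IsStationaryLaw T α ω (μ α)) (hc : IsNormLike c)
    (hν : Integrable (fun x => ‖x‖ ^ 2) ν)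
    (h : Tendsto (fun α => wasserstein c (P α : Measure E) ν) (𝓝[>] 0) (𝓝 0)) :
    Tendsto (fun α => (√α)⁻¹ * ‖∫ x, x ∂(μ α) - θ - √α • ∫ y, y ∂ν‖) (𝓝[>] 0) (𝓝 0) := by
  have hid : ∀ ρ : Measure E, ∀ [IsProbabilityMeasure ρ], Integrable (fun x => ‖x‖ ^ 2) ρ →
      Integrable (fun x => x) ρ := fun ρ _ hρ =>
    ((memLp_two_iff_integrable_sq_norm aestronglyMeasurable_id).2 hρ).integrable one_le_two
  have hmean : Tendsto (fun α => ∫ x, x ∂(P α : Measure E)) (𝓝[>] 0) (𝓝 (∫ y, y ∂ν)) :=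
    tendsto_integral_of_tendsto_wasserstein hc LipschitzWith.id
      (hP.mono fun α hα => hid _ (hc.eLpNorm_two_ne_top_iff.1 hα.1)) (hid ν hν) h
  refine (tendsto_iff_norm_sub_tendsto_zero.1 hmean).congr' ?_
  filter_upwards [hPμ, hμ, self_mem_nhdsWithin] with α hPα ⟨_, hμ2, _⟩ hα
  rw [hPα, inv_sqrt_mul_norm_integral_sub_eq (hid _ hμ2) θ _ hα]

variable [IsProbabilityMeasure ω]

lemma exists_isScaledStationary (hc : IsNormLike c) (hT : Continuous T) (θ : E)
    (hμ : ∀ᶠ α in 𝓝[>] 0, IsStationaryLaw T α ω (μ α)) :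
    ∃ P, IsScaledStationary c T θ ω P ∧
      ∀ᶠ α in 𝓝[>] 0, (P α : Measure E) = (μ α).map fun x => (√α)⁻¹ • (x - θ) := by
  have hprob : ∀ᶠ α in 𝓝[>] 0, ∃ Q : ProbabilityMeasure E,
      (Q : Measure E) = (μ α).map fun x => (√α)⁻¹ • (x - θ) := hμ.mono fun α ⟨_, _⟩ =>
    ⟨⟨_, Measure.isProbabilityMeasure_map (by fun_prop)⟩, rfl⟩
  have : Nonempty (ProbabilityMeasure E) := ⟨⟨ω, inferInstance⟩⟩
  obtain ⟨P, hP⟩ := hprob.choice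
  refine ⟨P, ?_, hP⟩
  filter_upwards [hP, hμ, self_mem_nhdsWithin] with α hPα ⟨_, hμ2, hstat⟩ hα
  rw [hPα]
  exact ⟨hc.eLpNorm_ne_top_iff.2 (memLp_map_smul_sub
    ((memLp_two_iff_integrable_sq_norm aestronglyMeasurable_id).2 hμ2) _ _),
    by rw [eulerLaw_scaledOp hT hα, hstat]⟩

theorem stmt_6_general (hγ0 : 0 ≤ γ) (hγ1 : γ < 1) (hc : IsNormLike c)
    (hT : ∀ x y, c (T x - T y) ≤ γ * c (x - y)) (hfix : T θ = θ)
    (hG : ∀ r : ℝ, 0 ≤ r → ∀ x, G (r • x) = r • G x)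
    (hTG : (fun h => T (θ + h) - θ - G h) =o[𝓝 0] id) (hω : IsNoise ω)
    (hμ : ∀ᶠ α in 𝓝[>] 0, IsStationaryLaw T α ω (μ α)) :
    ∃ ν : Measure E,
      (IsProbabilityMeasure ν ∧ Integrable (fun x => ‖x‖ ^ 2) ν ∧
        Tendsto (fun α => W2dist c ((μ α).map fun x => (√α)⁻¹ • (x - θ)) ν) (𝓝[>] 0) (𝓝 0)) ∧
      (∀ ν' : Measure E, IsProbabilityMeasure ν' → Integrable (fun x => ‖x‖ ^ 2) ν' →
        Tendsto (fun α => W2dist c ((μ α).map fun x => (√α)⁻¹ • (x - θ)) ν') (𝓝[>] 0) (𝓝 0) →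
        ν' = ν) ∧
      (∀ ω' : Measure E, IsProbabilityMeasure ω' → IsNoise ω' →
        (∀ z, ∫ x, inner ℝ z x ^ 2 ∂ω' = ∫ x, inner ℝ z x ^ 2 ∂ω) →
        ∀ μ' : ℝ → Measure E, (∀ᶠ α in 𝓝[>] 0, IsStationaryLaw T α ω' (μ' α)) →
          Tendsto (fun α => W2dist c ((μ' α).map fun x => (√α)⁻¹ • (x - θ)) ν) (𝓝[>] 0) (𝓝 0)) ∧
      Tendsto (fun α => (√α)⁻¹ * ‖∫ x, x ∂(μ α) - θ - √α • ∫ y, y ∂ν‖) (𝓝[>] 0) (𝓝 0) := by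
  have hTc := hc.continuous_of_le_mul hT
  obtain ⟨P, hP, hPμ⟩ := exists_isScaledStationary hc hTc θ hμ
  obtain ⟨ν, hν, hlim⟩ := hP.exists_tendsto_wasserstein hω hc hγ0 hγ1 hT hfix hG hTG
  have hν2 := hc.eLpNorm_two_ne_top_iff.1 hν
  have hPν := hlim ω hω (fun _ => rfl) P hP
  refine ⟨ν, ⟨inferInstance, hν2, (hP.tendsto_W2dist_map_iff hPμ hc hν2).2 hPν⟩,
    fun ν' _ hν'2 hν' => ?_, fun ω' _ hω' hcov μ' hμ' => ?_, hP.tendsto_bias hPμ hμ hc hν2 hPν⟩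
  · exact eq_of_tendsto_wasserstein hc ((hP.tendsto_W2dist_map_iff hPμ hc hν'2).1 hν') hPν
  · obtain ⟨P', hP', hPμ'⟩ := exists_isScaledStationary hc hTc θ hμ'
    exact (hP'.tendsto_W2dist_map_iff hPμ' hc hν2).2 (hlim ω' hω' hcov P' hP')

end Fluctuations

theorem stmt_6 {d m : ℕ} (γ : ℝ) (hγ : γ ∈ Set.Ioo (0:ℝ) 1)
    (c : EuclideanSpace ℝ (Fin d) → ℝ) (hc : IsNormLike c)
    (T : EuclideanSpace ℝ (Fin d) → EuclideanSpace ℝ (Fin d))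
    (hT : ∀ θ θ', c (T θ - T θ') ≤ γ * c (θ - θ'))
    (θstar : EuclideanSpace ℝ (Fin d)) (hfix : T θstar = θstar)
    -- g∘F decomposability of T at θstar
    (g : EuclideanSpace ℝ (Fin m) → EuclideanSpace ℝ (Fin d))
    (F : EuclideanSpace ℝ (Fin d) → EuclideanSpace ℝ (Fin m))
    (ε : ℝ) (hε : 0 < ε)
    (hgcont : Continuous g)
    (hghom : ∀ r : ℝ, 0 ≤ r → ∀ x, g (r • x) = r • g x)
    (hF0 : F 0 = 0)
    (hFdiff : ∀ x ∈ Metric.ball (0 : EuclideanSpace ℝ (Fin d)) ε, DifferentiableAt ℝ F x)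
    (hFderiv : ContinuousAt (fderiv ℝ F) 0)
    (hdecomp : ∀ θ ∈ Metric.ball θstar ε, T θ = θstar + g (F (θ - θstar)))
    -- i.i.d. zero-mean noise with finite fourth moment, given by its law νw
    (νw : Measure (EuclideanSpace ℝ (Fin d))) [IsProbabilityMeasure νw]
    (hνint : Integrable (fun x : EuclideanSpace ℝ (Fin d) => x) νw)
    (hνmean : ∫ x, x ∂νw = 0)
    (hν4 : Integrable (fun x : EuclideanSpace ℝ (Fin d) => ‖x‖ ^ 4) νw)
    -- the stationary distributions μ α for small α
    (α₁ : ℝ) (hα₁ : 0 < α₁) (μ : ℝ → Measure (EuclideanSpace ℝ (Fin d)))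
    (hμ : ∀ α ∈ Set.Ioc (0:ℝ) α₁, IsProbabilityMeasure (μ α) ∧
      Integrable (fun x : EuclideanSpace ℝ (Fin d) => ‖x‖ ^ 2) (μ α) ∧
      saStep T α νw (μ α) = μ α) :
    ∃ ν : Measure (EuclideanSpace ℝ (Fin d)),
      (IsProbabilityMeasure ν ∧ Integrable (fun x : EuclideanSpace ℝ (Fin d) => ‖x‖ ^ 2) ν ∧
        Tendsto (fun α : ℝ =>
            W2dist c (Measure.map (fun x => (Real.sqrt α)⁻¹ • (x - θstar)) (μ α)) ν)
          (𝓝[>] 0) (𝓝 0)) ∧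
      (∀ ν' : Measure (EuclideanSpace ℝ (Fin d)),
        IsProbabilityMeasure ν' → Integrable (fun x : EuclideanSpace ℝ (Fin d) => ‖x‖ ^ 2) ν' →
        Tendsto (fun α : ℝ =>
            W2dist c (Measure.map (fun x => (Real.sqrt α)⁻¹ • (x - θstar)) (μ α)) ν')
          (𝓝[>] 0) (𝓝 0) → ν' = ν) ∧
      -- universality: the limit depends on the noise law only through T and Var(w₀)
      (∀ νw' : Measure (EuclideanSpace ℝ (Fin d)), IsProbabilityMeasure νw' →
        Integrable (fun x : EuclideanSpace ℝ (Fin d) => x) νw' → (∫ x, x ∂νw' = 0) →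
        Integrable (fun x : EuclideanSpace ℝ (Fin d) => ‖x‖ ^ 4) νw' →
        (∀ z : EuclideanSpace ℝ (Fin d),
          ∫ x, (@inner ℝ _ _ z x) ^ 2 ∂νw' = ∫ x, (@inner ℝ _ _ z x) ^ 2 ∂νw) →
        ∀ α₁' : ℝ, 0 < α₁' → ∀ μ' : ℝ → Measure (EuclideanSpace ℝ (Fin d)),
          (∀ α ∈ Set.Ioc (0:ℝ) α₁', IsProbabilityMeasure (μ' α) ∧
            Integrable (fun x : EuclideanSpace ℝ (Fin d) => ‖x‖ ^ 2) (μ' α) ∧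
            saStep T α νw' (μ' α) = μ' α) →
          Tendsto (fun α : ℝ =>
              W2dist c (Measure.map (fun x => (Real.sqrt α)⁻¹ • (x - θstar)) (μ' α)) ν)
            (𝓝[>] 0) (𝓝 0)) ∧
      -- bias expansion:  mean of μ_α = θ* + √α ∫ y dν + o(√α)
      Tendsto (fun α : ℝ =>
          (Real.sqrt α)⁻¹ * ‖(∫ x, x ∂(μ α)) - θstar - Real.sqrt α • (∫ y, y ∂ν)‖)
        (𝓝[>] 0) (𝓝 0) := by
  obtain ⟨ν, hlim, huniq, huniv, hbias⟩ := stmt_6_general hγ.1.le hγ.2 hc hT hfix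
    (G := fun x => g (fderiv ℝ F 0 x)) (fun r hr x => by rw [map_smul, hghom r hr])
    (isLittleO_sub_comp_fderiv hgcont hghom hF0
      (hFdiff 0 (Metric.mem_ball_self hε)).hasFDerivAt
      (eventually_of_mem (Metric.ball_mem_nhds θstar hε) hdecomp))
    (isNoise_of_integrable_norm_pow_four hν4 hνmean) (eventually_of_mem (Ioc_mem_nhdsGT hα₁) hμ)
  exact ⟨ν, hlim, huniq, fun νw' hprob _ hmean h4 hcov α₁' hα₁' μ' hμ' =>
    huniv νw' hprob (isNoise_of_integrable_norm_pow_four h4 hmean) hcov μ'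
      (eventually_of_mem (Ioc_mem_nhdsGT hα₁') hμ'), hbias⟩
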